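/- arXiv:1403.5302 — 3 statements merged into one kernel-verified Lean document; each statement's English description precedes it below -/
import Mathlib

section
/- Fix δ ≠ 0, and let f and g be positive functions on [0,∞) such that g is slowly varying and f is slowly varying with remainder g. Suppose also that the functions f, g, 1/f, and 1/g are locally bounded on [0,∞). Then there exists A > 0 such that |f(λx) − f(x)| ≤ A·f(x)·g(x)·max{λ^δ, λ^{−δ}} for all λ > 0 and x ≥ 0. -/
open Filter Asymptotics MeasureTheory

/-! In logarithmic variables `F t = f (exp t)` and `W t = (f * g) (exp t)`, the hypotheses say that
`log W` has increments `log W (t + v) - log W t` tending to `0`, and that `F (t + v) - F t` is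
`O(W t)`, for each fixed `v > 0`. A Steinhaus-type overlap argument makes such pointwise bounds
uniform over `v ∈ [0, 1]`. Chaining unit steps then gives Potter's bound
`W t' ≤ D * exp (ε * |t' - t|) * W t`, and chaining the increments of `F`, which this bound
dominates by a geometric sum, gives `|F t' - F t| ≤ C * exp (2 * ε * |t' - t|) * W t` for large
`t`, `t'`. Moving a small argument up to the threshold changes `F` by at most a multiple of `W`,
and increases `W` by at most a constant factor. -/

open scoped Topology

/-- Slow variation at infinity, the class `R_0`; positivity and measurability are not part of the
definition. -/
def SlowlyVarying (f : ℝ → ℝ) : Prop :=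
  ∀ lam : ℝ, 0 < lam → Tendsto (fun x => f (lam * x) / f x) atTop (𝓝 1)

/-- Slow variation of `f` with remainder `g`, the class `R_0^g`; that `g` tends to `0` is not part
of the definition. -/
def SlowlyVaryingWithRemainder (f g : ℝ → ℝ) : Prop :=
  ∀ lam : ℝ, 1 < lam → (fun x => f (lam * x) / f x - 1) =O[atTop] g

section SlowVariation

variable {f g : ℝ → ℝ}

lemma SlowlyVarying.mul (hf : SlowlyVarying f) (hg : SlowlyVarying g) :
    SlowlyVarying (fun x => f x * g x) := fun lam hlam => by
  simpa only [mul_div_mul_comm, mul_one] using (hf lam hlam).mul (hg lam hlam)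

lemma SlowlyVaryingWithRemainder.slowlyVarying (h : SlowlyVaryingWithRemainder f g)
    (hg : Tendsto g atTop (𝓝 0)) (hf : ∀ᶠ x in atTop, f x ≠ 0) : SlowlyVarying f := by
  have of_one_lt : ∀ lam : ℝ, 1 < lam → Tendsto (fun x => f (lam * x) / f x) atTop (𝓝 1) :=
    fun lam hlam => by simpa using ((h lam hlam).trans_tendsto hg).add_const 1
  intro lam hlam
  rcases lt_trichotomy lam 1 with hlt | rfl | hgt
  · have hinv := ((of_one_lt lam⁻¹ ((one_lt_inv₀ hlam).2 hlt)).comp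
      (tendsto_id.const_mul_atTop hlam)).inv₀ one_ne_zero
    simpa [Function.comp_def, inv_mul_cancel_left₀ hlam.ne'] using hinv
  · refine tendsto_const_nhds.congr' ?_
    filter_upwards [hf] with x hx
    rw [one_mul, div_self hx]
  · exact of_one_lt lam hgt

lemma SlowlyVaryingWithRemainder.isBigO_sub (h : SlowlyVaryingWithRemainder f g)
    (hf : ∀ᶠ x in atTop, f x ≠ 0) {lam : ℝ} (hlam : 1 < lam) :
    (fun x => f (lam * x) - f x) =O[atTop] fun x => f x * g x := by
  refine ((isBigO_refl f atTop).mul (h lam hlam)).congr' ?_ EventuallyEq.rfl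
  filter_upwards [hf] with x hx
  rw [mul_sub_one, mul_div_cancel₀ _ hx]

end SlowVariation

section UniformBounds

lemma exists_mem_sub_mem_of_lt_volume_add {E E' : Set ℝ} {L u : ℝ} (hE : E ⊆ Set.Ioc 0 L)
    (hE' : E' ⊆ Set.Ioc 0 L) (hE'_meas : MeasurableSet E') (hu : 0 ≤ u)
    (hvol : ENNReal.ofReal (L + u) < volume E + volume E') : ∃ v ∈ E, v - u ∈ E' := by
  have volume_translate : volume ((· - u) ⁻¹' E') = volume E' := by
    simpa only [sub_eq_add_neg] using measure_preimage_add_right volume (-u) E'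
  suffices (E ∩ (· - u) ⁻¹' E').Nonempty from this
  refine nonempty_inter_of_measure_lt_add volume (u := Set.Ioc 0 (L + u))
    ((measurable_id.sub_const u) hE'_meas) (fun v hv => ?_) (fun v hv => ?_) ?_
  · exact ⟨(hE hv).1, (hE hv).2.trans (le_add_of_nonneg_right hu)⟩
  · exact ⟨hu.trans_lt (sub_pos.1 (hE' hv).1), sub_le_iff_le_add.1 (hE' hv).2⟩
  · rwa [volume_translate, Real.volume_Ioc, sub_zero]

/-- For large `t` the sublevel sets of `φ t` and `φ (t + u)` fill most of `(0, 3]`, hence they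
overlap after translation by `u`. -/
lemma exists_eventually_exists_le_and_le_sub {φ : ℝ → ℝ → ℝ} (hφ : ∀ t, Measurable (φ t))
    (hbdd : ∀ v, 0 < v → ∃ c, ∀ᶠ t in atTop, φ t v ≤ c) :
    ∃ C, ∀ᶠ t in atTop, ∀ u ∈ Set.Icc (0 : ℝ) 1, ∃ v, φ t v ≤ C ∧ φ (t + u) (v - u) ≤ C := by
  let K : ℕ → Set ℝ := fun n => {v ∈ Set.Ioc 0 3 | ∀ t : ℝ, n ≤ t → φ t v ≤ n}
  have K_mono : Monotone K := fun n m hnm v hv =>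
    have hnm' : (n : ℝ) ≤ m := Nat.cast_le.2 hnm
    ⟨hv.1, fun t ht => (hv.2 t (hnm'.trans ht)).trans hnm'⟩
  have iUnion_K : ⋃ n, K n = Set.Ioc 0 3 := by
    refine subset_antisymm (Set.iUnion_subset fun n v hv => hv.1) fun v hv => ?_
    obtain ⟨c, hc⟩ := hbdd v hv.1
    obtain ⟨N, hN⟩ := eventually_atTop.1 hc
    obtain ⟨n, hn⟩ := exists_nat_ge (max N c)
    exact Set.mem_iUnion.2 ⟨n, hv, fun t ht =>
      (hN t (((le_max_left _ _).trans hn).trans ht)).trans ((le_max_right _ _).trans hn)⟩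
  obtain ⟨n, hn⟩ : ∃ n, 2 < volume (K n) := by
    have hlim := tendsto_measure_iUnion_atTop (μ := volume) K_mono
    rw [iUnion_K, Real.volume_Ioc] at hlim
    exact (hlim.eventually (lt_mem_nhds (by norm_num))).exists
  let S : ℝ → Set ℝ := fun t => Set.Ioc 0 3 ∩ {v | φ t v ≤ n}
  have S_meas : ∀ t, MeasurableSet (S t) := fun t =>
    measurableSet_Ioc.inter (measurableSet_le (hφ t) measurable_const)
  have volume_S : ∀ t : ℝ, n ≤ t → 2 < volume (S t) := fun t ht =>
    hn.trans_le (measure_mono fun v hv => ⟨hv.1, hv.2 t ht⟩)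
  refine ⟨n, (eventually_ge_atTop (n : ℝ)).mono fun t ht u hu => ?_⟩
  obtain ⟨v, hv, hvu⟩ : ∃ v ∈ S t, v - u ∈ S (t + u) := by
    refine exists_mem_sub_mem_of_lt_volume_add Set.inter_subset_left Set.inter_subset_left
      (S_meas _) hu.1 ?_
    calc ENNReal.ofReal (3 + u) ≤ ENNReal.ofReal (2 + 2) :=
          ENNReal.ofReal_le_ofReal (by linarith [hu.2])
      _ = 2 + 2 := by norm_num
      _ < _ := ENNReal.add_lt_add (volume_S t ht) (volume_S _ (by linarith [hu.1]))
  exact ⟨v, hv.2, hvu.2⟩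

lemma exists_eventually_abs_sub_le_mul {F W : ℝ → ℝ} {K : ℝ} (hF : Measurable F)
    (hW_pos : ∀ t, 0 < W t)
    (hW : ∀ᶠ t in atTop, ∀ u ∈ Set.Icc (0 : ℝ) 1, W (t + u) ≤ K * W t)
    (hFW : ∀ v, 0 < v → (fun t => F (t + v) - F t) =O[atTop] W) :
    ∃ C, ∀ᶠ t in atTop, ∀ u ∈ Set.Icc (0 : ℝ) 1, |F (t + u) - F t| ≤ C * W t := by
  obtain ⟨C, hC⟩ := exists_eventually_exists_le_and_le_sub
    (φ := fun t v => |F (t + v) - F t| / W t)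
    (fun t => (((hF.comp (measurable_const_add t)).sub_const _).abs).div_const _)
    (fun v hv => by
      obtain ⟨c, hc⟩ := (hFW v hv).bound
      refine ⟨c, hc.mono fun t ht => ?_⟩
      rwa [div_le_iff₀ (hW_pos t), ← abs_of_pos (hW_pos t)])
  refine ⟨C + C * K, ?_⟩
  filter_upwards [hC, hW] with t ht htW u hu
  obtain ⟨v, hv, hvu⟩ := ht u hu
  have hC_nonneg : 0 ≤ C := (div_nonneg (abs_nonneg _) (hW_pos t).le).trans hv
  rw [div_le_iff₀ (hW_pos _)] at hv hvu
  rw [add_add_sub_cancel] at hvu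
  calc |F (t + u) - F t| ≤ |F (t + u) - F (t + v)| + |F (t + v) - F t| := abs_sub_le _ _ _
    _ ≤ C * W (t + u) + C * W t := by rw [abs_sub_comm (F (t + u))]; exact add_le_add hvu hv
    _ ≤ C * (K * W t) + C * W t := by gcongr; exact htW u hu
    _ = (C + C * K) * W t := by ring

end UniformBounds

section Chaining

lemma abs_add_sub_le_add_sum_floor {F b c : ℝ → ℝ} {T t s : ℝ}
    (hstep : ∀ r ≥ T, |F (r + 1) - F r| ≤ b r)
    (hlast : ∀ r ≥ T, ∀ u ∈ Set.Icc (0 : ℝ) 1, |F (r + u) - F r| ≤ c r)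
    (ht : T ≤ t) (hs : 0 ≤ s) :
    |F (t + s) - F t| ≤ c (t + ⌊s⌋₊) + ∑ j ∈ Finset.range ⌊s⌋₊, b (t + j) := by
  have le_add_nat : ∀ j : ℕ, T ≤ t + j := fun j => ht.trans (le_add_of_nonneg_right j.cast_nonneg)
  have hfloor : |F (t + ⌊s⌋₊) - F t| ≤ ∑ j ∈ Finset.range ⌊s⌋₊, b (t + j) := by
    have h := dist_le_range_sum_of_dist_le (f := fun j : ℕ => F (t + j)) ⌊s⌋₊
      (d := fun j => b (t + j)) fun {j} _ => by
        rw [dist_comm, Real.dist_eq, Nat.cast_succ, ← add_assoc]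
        exact hstep _ (le_add_nat j)
    rwa [Nat.cast_zero, add_zero, dist_comm] at h
  have hfract : |F (t + s) - F (t + ⌊s⌋₊)| ≤ c (t + ⌊s⌋₊) := by
    have h := hlast (t + ⌊s⌋₊) (le_add_nat _) (s - ⌊s⌋₊)
      ⟨sub_nonneg.2 (Nat.floor_le hs), by linarith [Nat.lt_floor_add_one s]⟩
    rwa [add_add_sub_cancel] at h
  exact (abs_sub_le _ _ _).trans (add_le_add hfract hfloor)

lemma exists_abs_sub_le_add_mul_abs_sub {h : ℝ → ℝ} (hh : Measurable h)
    (hlim : ∀ v, 0 < v → Tendsto (fun t => h (t + v) - h t) atTop (𝓝 0)) {ε : ℝ} (hε : 0 < ε) :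
    ∃ C T, ∀ t ≥ T, ∀ t' ≥ T, |h t' - h t| ≤ C + ε * |t' - t| := by
  obtain ⟨C, hC⟩ := exists_eventually_abs_sub_le_mul (W := fun _ => 1) (K := 1) hh
    (fun _ => one_pos) (by simp) (fun v hv => (hlim v hv).isBigO_one ℝ)
  have hstep : ∀ᶠ t in atTop, |h (t + 1) - h t| ≤ ε := by
    have habs := (hlim 1 one_pos).abs
    rw [abs_zero] at habs
    exact habs.eventually_le_const hε
  obtain ⟨T, hT⟩ := eventually_atTop.1 (hstep.and hC)
  refine ⟨C, T, fun t ht t' ht' => ?_⟩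
  wlog htt' : t ≤ t' generalizing t t'
  · rw [abs_sub_comm, abs_sub_comm t']
    exact this t' ht' t ht (le_of_not_ge htt')
  have hs : 0 ≤ t' - t := sub_nonneg.2 htt'
  have hchain := abs_add_sub_le_add_sum_floor (fun r hr => (hT r hr).1) (fun r hr => (hT r hr).2)
    ht hs
  rw [add_sub_cancel, Finset.sum_const, Finset.card_range, nsmul_eq_mul, mul_one] at hchain
  rw [abs_of_nonneg hs]
  nlinarith [Nat.floor_le hs]

/-- Potter's bound, in logarithmic variables. -/
lemma exists_le_mul_exp_mul_abs_sub {W : ℝ → ℝ} (hW : Measurable W) (hW_pos : ∀ t, 0 < W t)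
    (hlim : ∀ v, 0 < v → Tendsto (fun t => W (t + v) / W t) atTop (𝓝 1)) {ε : ℝ} (hε : 0 < ε) :
    ∃ D T, ∀ t ≥ T, ∀ t' ≥ T, W t' ≤ D * Real.exp (ε * |t' - t|) * W t := by
  obtain ⟨C, T, hT⟩ := exists_abs_sub_le_add_mul_abs_sub (Real.measurable_log.comp hW)
    (fun v hv => by
      simpa [Function.comp_def, Real.log_div (hW_pos _).ne' (hW_pos _).ne']
        using (hlim v hv).log one_ne_zero) hε
  refine ⟨Real.exp C, T, fun t ht t' ht' => ?_⟩
  rw [← Real.exp_add, ← div_le_iff₀ (hW_pos t),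
    ← Real.log_le_iff_le_exp (div_pos (hW_pos t') (hW_pos t)),
    Real.log_div (hW_pos t').ne' (hW_pos t).ne']
  exact (le_abs_self _).trans (hT t ht t' ht')

lemma sum_range_floor_succ_exp_le {η s : ℝ} (hη : 0 < η) (hs : 0 ≤ s) :
    ∑ j ∈ Finset.range (⌊s⌋₊ + 1), Real.exp (η * j) ≤
      Real.exp η / (Real.exp η - 1) * Real.exp (η * s) := by
  have hq : 0 < Real.exp η - 1 := sub_pos.2 (Real.one_lt_exp_iff.2 hη)
  calc ∑ j ∈ Finset.range (⌊s⌋₊ + 1), Real.exp (η * j)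
      = (Real.exp η ^ (⌊s⌋₊ + 1) - 1) / (Real.exp η - 1) := by
        rw [← geom_sum_eq (sub_pos.1 hq).ne']
        simp only [mul_comm η, Real.exp_nat_mul]
    _ ≤ Real.exp η ^ (⌊s⌋₊ + 1) / (Real.exp η - 1) := by gcongr; linarith
    _ = Real.exp η / (Real.exp η - 1) * Real.exp (⌊s⌋₊ * η) := by
        rw [Real.exp_nat_mul]; ring
    _ ≤ Real.exp η / (Real.exp η - 1) * Real.exp (η * s) := by
        rw [mul_comm η]
        gcongr
        exact Nat.floor_le hs

variable {F W : ℝ → ℝ} {D η T : ℝ}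

lemma exists_abs_add_sub_le_mul_exp (hF : Measurable F) (hW_pos : ∀ t, 0 < W t) (hη : 0 < η)
    (hW : ∀ t ≥ T, ∀ t' ≥ T, W t' ≤ D * Real.exp (η * |t' - t|) * W t)
    (hFW : ∀ v, 0 < v → (fun t => F (t + v) - F t) =O[atTop] W) :
    ∃ C, ∃ T₁ ≥ T, ∀ t ≥ T₁, ∀ s, 0 ≤ s → |F (t + s) - F t| ≤ C * Real.exp (η * s) * W t := by
  have hW_add : ∀ t ≥ T, ∀ s, 0 ≤ s → W (t + s) ≤ D * Real.exp (η * s) * W t := by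
    intro t ht s hs
    simpa [abs_of_nonneg hs] using hW t ht (t + s) (by linarith)
  have hD : 0 ≤ D := by
    have h := hW T le_rfl T le_rfl
    rw [sub_self, abs_zero, mul_zero, Real.exp_zero, mul_one] at h
    exact (pos_of_mul_pos_left ((hW_pos T).trans_le h) (hW_pos T).le).le
  have hW_unit : ∀ᶠ t in atTop, ∀ u ∈ Set.Icc (0 : ℝ) 1, W (t + u) ≤ D * Real.exp η * W t := by
    filter_upwards [eventually_ge_atTop T] with t ht u hu
    refine (hW_add t ht u hu.1).trans ?_
    have := (hW_pos t).le
    gcongr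
    exact mul_le_of_le_one_right hη.le hu.2
  obtain ⟨C, hC⟩ := exists_eventually_abs_sub_le_mul hF hW_pos hW_unit hFW
  obtain ⟨T₁, hT₁⟩ := eventually_atTop.1 (hC.and (eventually_ge_atTop T))
  have hC_nonneg : 0 ≤ C := nonneg_of_mul_nonneg_left
    ((abs_nonneg _).trans ((hT₁ T₁ le_rfl).1 0 (by simp))) (hW_pos T₁)
  refine ⟨C * D * (Real.exp η / (Real.exp η - 1)), T₁, (hT₁ T₁ le_rfl).2, fun t ht s hs => ?_⟩
  have hWt := (hW_pos t).le
  calc |F (t + s) - F t|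
      ≤ C * W (t + ⌊s⌋₊) + ∑ j ∈ Finset.range ⌊s⌋₊, C * W (t + j) :=
        abs_add_sub_le_add_sum_floor (fun r hr => (hT₁ r hr).1 1 (by simp))
          (fun r hr => (hT₁ r hr).1) ht hs
    _ = ∑ j ∈ Finset.range (⌊s⌋₊ + 1), C * W (t + j) := by rw [Finset.sum_range_succ, add_comm]
    _ ≤ ∑ j ∈ Finset.range (⌊s⌋₊ + 1), C * (D * Real.exp (η * j) * W t) := by
        gcongr with j
        exact hW_add t (hT₁ t ht).2 j j.cast_nonneg
    _ = C * D * W t * ∑ j ∈ Finset.range (⌊s⌋₊ + 1), Real.exp (η * j) := by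
        rw [Finset.mul_sum]
        exact Finset.sum_congr rfl fun j _ => by ring
    _ ≤ C * D * W t * (Real.exp η / (Real.exp η - 1) * Real.exp (η * s)) := by
        gcongr
        exact sum_range_floor_succ_exp_le hη hs
    _ = C * D * (Real.exp η / (Real.exp η - 1)) * Real.exp (η * s) * W t := by ring

lemma exists_abs_sub_le_mul_exp_two_mul (hF : Measurable F) (hW_pos : ∀ t, 0 < W t) (hη : 0 < η)
    (hW : ∀ t ≥ T, ∀ t' ≥ T, W t' ≤ D * Real.exp (η * |t' - t|) * W t)
    (hFW : ∀ v, 0 < v → (fun t => F (t + v) - F t) =O[atTop] W) :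
    ∃ C T₁, ∀ t ≥ T₁, ∀ t' ≥ T₁, |F t' - F t| ≤ C * Real.exp (2 * η * |t' - t|) * W t := by
  obtain ⟨C, T₁, hTT₁, hC⟩ := exists_abs_add_sub_le_mul_exp hF hW_pos hη hW hFW
  have hC_nonneg : 0 ≤ C := by
    have h := (abs_nonneg _).trans (hC T₁ le_rfl 0 le_rfl)
    rw [mul_zero, Real.exp_zero, mul_one] at h
    exact nonneg_of_mul_nonneg_left h (hW_pos T₁)
  refine ⟨max C (C * D), T₁, fun t ht t' ht' => ?_⟩
  have hWt := (hW_pos t).le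
  rcases le_total t t' with htt' | htt'
  · have hs : 0 ≤ t' - t := sub_nonneg.2 htt'
    have h := hC t ht (t' - t) hs
    rw [add_sub_cancel] at h
    rw [abs_of_nonneg hs]
    refine h.trans ?_
    gcongr
    · exact le_max_left _ _
    · linarith
  · have hs : 0 ≤ t - t' := sub_nonneg.2 htt'
    have h := hC t' ht' (t - t') hs
    rw [add_sub_cancel, abs_sub_comm, ← abs_of_nonneg hs, abs_sub_comm t] at h
    calc |F t' - F t| ≤ C * Real.exp (η * |t' - t|) * W t' := h
      _ ≤ C * Real.exp (η * |t' - t|) * (D * Real.exp (η * |t' - t|) * W t) := by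
          gcongr
          exact hW t (hTT₁.trans ht) t' (hTT₁.trans ht')
      _ = C * D * Real.exp (2 * η * |t' - t|) * W t := by
          rw [two_mul, add_mul, Real.exp_add]; ring
      _ ≤ max C (C * D) * Real.exp (2 * η * |t' - t|) * W t := by
          gcongr
          exact le_max_right _ _

end Chaining

section ClampingBelowThreshold

variable {F W : ℝ → ℝ} {C D M m ε T : ℝ}

lemma abs_sub_apply_max_le_mul (hM : ∀ t ≤ T, |F t| ≤ M) (hm : 0 < m) (hmT : m ≤ W T)
    (hW_nonneg : ∀ t, 0 ≤ W t) (t : ℝ) : |F t - F (max t T)| ≤ 2 * M / m * W (max t T) := by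
  have hM_nonneg : 0 ≤ M := (abs_nonneg _).trans (hM T le_rfl)
  rcases le_total t T with htT | htT
  · rw [max_eq_right htT]
    calc |F t - F T| ≤ |F t| + |F T| := abs_sub _ _
      _ ≤ M + M := add_le_add (hM t htT) (hM T le_rfl)
      _ = 2 * M / m * m := by rw [div_mul_cancel₀ _ hm.ne', two_mul]
      _ ≤ 2 * M / m * W T := by gcongr
  · rw [max_eq_left htT, sub_self, abs_zero]
    exact mul_nonneg (by positivity) (hW_nonneg t)

lemma apply_max_le_mul (hW_nonneg : ∀ t, 0 ≤ W t) (hm : 0 < m) (hmW : ∀ t ≤ T, m ≤ W t) (t : ℝ) :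
    W (max t T) ≤ (1 + W T / m) * W t := by
  have hWT := hW_nonneg T
  rcases le_total t T with htT | htT
  · rw [max_eq_right htT]
    calc W T = W T / m * m := (div_mul_cancel₀ _ hm.ne').symm
      _ ≤ (1 + W T / m) * W t := by
        gcongr
        · exact le_add_of_nonneg_left zero_le_one
        · exact hmW t htT
  · rw [max_eq_left htT]
    exact le_mul_of_one_le_left (hW_nonneg t) (le_add_of_nonneg_right (by positivity))

lemma exists_forall_abs_sub_le_of_forall_ge (hW_pos : ∀ t, 0 < W t) (hε : 0 ≤ ε)
    (hW : ∀ t ≥ T, ∀ t' ≥ T, W t' ≤ D * Real.exp (ε * |t' - t|) * W t)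
    (hF : ∀ t ≥ T, ∀ t' ≥ T, |F t' - F t| ≤ C * Real.exp (ε * |t' - t|) * W t)
    (hM : ∀ t ≤ T, |F t| ≤ M) (hm : 0 < m) (hmW : ∀ t ≤ T, m ≤ W t) :
    ∃ A, ∀ t t', |F t' - F t| ≤ A * Real.exp (ε * |t' - t|) * W t := by
  have hW_nonneg : ∀ t, 0 ≤ W t := fun t => (hW_pos t).le
  have nonneg_of_le : ∀ {a b : ℝ}, 0 ≤ a → a ≤ b * Real.exp (ε * |T - T|) * W T → 0 ≤ b :=
    fun ha hab => nonneg_of_mul_nonneg_left (nonneg_of_mul_nonneg_left (ha.trans hab) (hW_pos T))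
      (Real.exp_pos _)
  have hC : 0 ≤ C := nonneg_of_le (abs_nonneg _) (hF T le_rfl T le_rfl)
  have hD : 0 ≤ D := nonneg_of_le (hW_nonneg T) (hW T le_rfl T le_rfl)
  have hM_nonneg : 0 ≤ M := (abs_nonneg _).trans (hM T le_rfl)
  set B := 2 * M / m
  set K := 1 + W T / m
  have hB : 0 ≤ B := by positivity
  refine ⟨(B * D + C + B) * K, fun t t' => ?_⟩
  set r := max t T
  set r' := max t' T
  set E := Real.exp (ε * |t' - t|)
  have hE : 1 ≤ E := Real.one_le_exp (by positivity)
  have exp_le : Real.exp (ε * |r' - r|) ≤ E :=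
    Real.exp_le_exp.2 (mul_le_mul_of_nonneg_left (abs_max_sub_max_le_abs t' t T) hε)
  have hWr := hW_nonneg r
  calc |F t' - F t| ≤ |F t' - F r'| + |F r' - F r| + |F r - F t| :=
        (abs_sub_le _ (F r) _).trans (add_le_add_left (abs_sub_le _ _ _) _)
    _ ≤ B * W r' + C * Real.exp (ε * |r' - r|) * W r + B * W r := by
        gcongr
        · exact abs_sub_apply_max_le_mul hM hm (hmW T le_rfl) hW_nonneg t'
        · exact hF r (le_max_right _ _) r' (le_max_right _ _)
        · rw [abs_sub_comm]
          exact abs_sub_apply_max_le_mul hM hm (hmW T le_rfl) hW_nonneg t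
    _ ≤ B * (D * Real.exp (ε * |r' - r|) * W r) + C * Real.exp (ε * |r' - r|) * W r
          + B * W r := by
        gcongr
        exact hW r (le_max_right _ _) r' (le_max_right _ _)
    _ ≤ B * (D * E * W r) + C * E * W r + B * E * W r := by
        gcongr
        exact le_mul_of_one_le_right hB hE
    _ = (B * D + C + B) * E * W r := by ring
    _ ≤ (B * D + C + B) * E * (K * W t) := by
        gcongr
        exact apply_max_le_mul hW_nonneg hm hmW t
    _ = (B * D + C + B) * K * E * W t := by ring

end ClampingBelowThreshold

section GrowthBound

theorem exists_forall_abs_sub_le_mul_exp {F W : ℝ → ℝ} (hF : Measurable F) (hW : Measurable W)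
    (hW_lim : ∀ v, 0 < v → Tendsto (fun t => W (t + v) / W t) atTop (𝓝 1))
    (hFW : ∀ v, 0 < v → (fun t => F (t + v) - F t) =O[atTop] W)
    (hF_bdd : ∀ T, ∃ M, ∀ t ≤ T, |F t| ≤ M) (hW_bdd : ∀ T, ∃ m > 0, ∀ t ≤ T, m ≤ W t)
    {ε : ℝ} (hε : 0 < ε) :
    ∃ A, ∀ t t', |F t' - F t| ≤ A * Real.exp (ε * |t' - t|) * W t := by
  have hW_pos : ∀ t, 0 < W t := fun t =>
    have ⟨_, hm, hmW⟩ := hW_bdd t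
    hm.trans_le (hmW t le_rfl)
  obtain ⟨_, _, hW_half⟩ := exists_le_mul_exp_mul_abs_sub hW hW_pos hW_lim (half_pos hε)
  obtain ⟨C, T₁, hC⟩ := exists_abs_sub_le_mul_exp_two_mul hF hW_pos (half_pos hε) hW_half hFW
  rw [mul_div_cancel₀ ε two_ne_zero] at hC
  obtain ⟨D, T₂, hD⟩ := exists_le_mul_exp_mul_abs_sub hW hW_pos hW_lim hε
  obtain ⟨M, hM⟩ := hF_bdd (max T₁ T₂)
  obtain ⟨m, hm, hmW⟩ := hW_bdd (max T₁ T₂)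
  exact exists_forall_abs_sub_le_of_forall_ge hW_pos hε.le
    (fun t ht t' ht' => hD t (le_of_max_le_right ht) t' (le_of_max_le_right ht'))
    (fun t ht t' ht' => hC t (le_of_max_le_left ht) t' (le_of_max_le_left ht')) hM hm hmW

lemma max_rpow_rpow_neg_eq_exp {lam : ℝ} (hlam : 0 < lam) (δ : ℝ) :
    max (lam ^ δ) (lam ^ (-δ)) = Real.exp (|δ| * |Real.log lam|) := by
  rw [Real.rpow_def_of_pos hlam, Real.rpow_def_of_pos hlam, ← Real.exp_monotone.map_max, mul_neg,
    ← abs_eq_max_neg, abs_mul, mul_comm]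

theorem slowly_varying_with_remainder_growth_bound_general {δ : ℝ} (hδ : δ ≠ 0) {f w : ℝ → ℝ}
    (hf_meas : Measurable f) (hw_meas : Measurable w) (hw_slow : SlowlyVarying w)
    (hfw : ∀ lam : ℝ, 1 < lam → (fun x => f (lam * x) - f x) =O[atTop] w)
    (hf_bdd : ∀ a : ℝ, 0 < a → ∃ M, ∀ x ∈ Set.Icc 0 a, |f x| ≤ M)
    (hw_bdd : ∀ a : ℝ, 0 < a → ∃ m > 0, ∀ x ∈ Set.Icc 0 a, m ≤ w x) :
    ∃ A : ℝ, 0 < A ∧ ∀ lam : ℝ, 0 < lam → ∀ x : ℝ, 0 ≤ x →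
      |f (lam * x) - f x| ≤ A * w x * max (lam ^ δ) (lam ^ (-δ)) := by
  have hexp : ∀ t v : ℝ, Real.exp v * Real.exp t = Real.exp (t + v) := fun t v => by
    rw [Real.exp_add, mul_comm]
  have exp_mem : ∀ {t T : ℝ}, t ≤ T → Real.exp t ∈ Set.Icc 0 (Real.exp T) := fun h =>
    ⟨(Real.exp_pos _).le, Real.exp_le_exp.2 h⟩
  obtain ⟨A, hA⟩ := exists_forall_abs_sub_le_mul_exp (F := fun t => f (Real.exp t))
    (W := fun t => w (Real.exp t)) (hf_meas.comp Real.measurable_exp)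
    (hw_meas.comp Real.measurable_exp)
    (fun v _ => by
      simpa only [Function.comp_def, hexp]
        using (hw_slow _ (Real.exp_pos v)).comp Real.tendsto_exp_atTop)
    (fun v hv => by
      simpa only [Function.comp_def, hexp]
        using (hfw _ (Real.one_lt_exp_iff.2 hv)).comp_tendsto Real.tendsto_exp_atTop)
    (fun T => (hf_bdd _ (Real.exp_pos T)).imp fun M hM t ht => hM _ (exp_mem ht))
    (fun T => (hw_bdd _ (Real.exp_pos T)).imp fun m hm => ⟨hm.1, fun t ht => hm.2 _ (exp_mem ht)⟩)
    (abs_pos.2 hδ)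
  refine ⟨max A 1, lt_max_of_lt_right one_pos, fun lam hlam x hx => ?_⟩
  have hwx : 0 ≤ w x := by
    obtain ⟨m, hm, hmw⟩ := hw_bdd (x + 1) (by positivity)
    exact hm.le.trans (hmw x ⟨hx, by linarith⟩)
  rw [max_rpow_rpow_neg_eq_exp hlam]
  rcases hx.eq_or_lt with rfl | hx_pos
  · rw [mul_zero, sub_self, abs_zero]
    positivity
  · have h := hA (Real.log x) (Real.log x + Real.log lam)
    rw [← hexp, Real.exp_log hlam, Real.exp_log hx_pos, add_sub_cancel_left] at h
    calc |f (lam * x) - f x| ≤ A * Real.exp (|δ| * |Real.log lam|) * w x := h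
      _ ≤ max A 1 * Real.exp (|δ| * |Real.log lam|) * w x := by gcongr; exact le_max_left _ _
      _ = max A 1 * w x * Real.exp (|δ| * |Real.log lam|) := by ring

lemma exists_pos_le_mul_of_inv_le {f g : ℝ → ℝ} {s : Set ℝ} {M : ℝ}
    (hf : ∀ x ∈ s, 0 < f x) (hg : ∀ x ∈ s, 0 < g x)
    (hfM : ∀ x ∈ s, (f x)⁻¹ ≤ M) (hgM : ∀ x ∈ s, (g x)⁻¹ ≤ M) :
    ∃ m > 0, ∀ x ∈ s, m ≤ f x * g x := by
  refine ⟨(max M 1)⁻¹ * (max M 1)⁻¹, by positivity, fun x hx => ?_⟩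
  have := (hf x hx).le
  gcongr
  · exact inv_le_of_inv_le₀ (hf x hx) ((hfM x hx).trans (le_max_left _ _))
  · exact inv_le_of_inv_le₀ (hg x hx) ((hgM x hx).trans (le_max_left _ _))

end GrowthBound

/-- Theorem 3.8.6(b) of Bingham–Goldie–Teugels, as used in the paper.
Fix `δ ≠ 0`, and let `f` and `g` be positive functions on `[0,∞)` such that `g` is slowly
varying and `f` is slowly varying with remainder `g`.  Suppose also that `f`, `g`, `1/f`
and `1/g` are locally bounded on `[0,∞)`.  Then there exists `A > 0` such that
`|f(λx) − f(x)| ≤ A f(x) g(x) max{λ^δ, λ^{−δ}}` for all `λ > 0` and `x ≥ 0`. -/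
theorem slowly_varying_with_remainder_growth_bound
    (δ : ℝ) (hδ : δ ≠ 0) (f g : ℝ → ℝ)
    (hf_meas : Measurable f) (hg_meas : Measurable g)
    (hf_pos : ∀ x : ℝ, 0 ≤ x → 0 < f x) (hg_pos : ∀ x : ℝ, 0 ≤ x → 0 < g x)
    -- `g` is slowly varying
    (hg_slow : ∀ lam : ℝ, 0 < lam →
      Tendsto (fun x => g (lam * x) / g x) atTop (nhds 1))
    -- `g(x) → 0` as `x → ∞`
    (hg_zero : Tendsto g atTop (nhds 0))
    -- `f` is slowly varying with remainder `g`
    (hf_rem : ∀ lam : ℝ, 1 < lam →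
      (fun x => f (lam * x) / f x - 1) =O[atTop] g)
    -- `f`, `g`, `1/f`, `1/g` are locally bounded on `[0,∞)`
    (hloc : ∀ a : ℝ, 0 < a → ∃ M : ℝ, ∀ x ∈ Set.Icc (0:ℝ) a,
      f x ≤ M ∧ g x ≤ M ∧ (f x)⁻¹ ≤ M ∧ (g x)⁻¹ ≤ M) :
    ∃ A : ℝ, 0 < A ∧ ∀ lam : ℝ, 0 < lam → ∀ x : ℝ, 0 ≤ x →
      |f (lam * x) - f x| ≤ A * f x * g x * max (lam ^ δ) (lam ^ (-δ)) := by
  have hf_ne : ∀ᶠ x in atTop, f x ≠ 0 :=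
    (eventually_ge_atTop 0).mono fun x hx => (hf_pos x hx).ne'
  have hf_remainder : SlowlyVaryingWithRemainder f g := hf_rem
  have hf_bdd : ∀ a : ℝ, 0 < a → ∃ M, ∀ x ∈ Set.Icc 0 a, |f x| ≤ M := fun a ha =>
    (hloc a ha).imp fun M hM x hx => (abs_of_pos (hf_pos x hx.1)).trans_le (hM x hx).1
  have hfg_bdd : ∀ a : ℝ, 0 < a → ∃ m > 0, ∀ x ∈ Set.Icc 0 a, m ≤ f x * g x := fun a ha =>
    have ⟨_, hM⟩ := hloc a ha
    exists_pos_le_mul_of_inv_le (fun x hx => hf_pos x hx.1) (fun x hx => hg_pos x hx.1)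
      (fun x hx => (hM x hx).2.2.1) (fun x hx => (hM x hx).2.2.2)
  simpa only [Pi.mul_apply, mul_assoc] using
    slowly_varying_with_remainder_growth_bound_general hδ hf_meas (hf_meas.mul hg_meas)
      ((hf_remainder.slowlyVarying hg_zero hf_ne).mul hg_slow)
      (fun _ hlam => hf_remainder.isBigO_sub hf_ne hlam) hf_bdd hfg_bdd
end

section
/- Suppose the Mellin transform MU of a nonnegative measurable function U on (0,∞) converges absolutely at least in the strip σ ≤ Re(z) ≤ τ, where −∞ < σ < τ < ∞. Let f be a measurable function on (0,∞), and assume: (1) f(x) = x^ρ l(x)(1 + O(h(x))) as x → ∞, where ρ ∈ (σ,τ), l is slowly varying with remainder g for some slowly varying g, h belongs to the Zygmund class, and g(x) → 0 and h(x) → 0 as x → ∞; (2) the functions g, 1/l, and 1/g are locally bounded on the interval (x_0,∞) for some x_0 > 0; (3) the function x ↦ x^{−σ} f(x) is bounded on every interval (0,a] with a > 0. Then the Mellin convolution satisfies U ⋆_M f(x) = MU(ρ)·x^ρ l(x)·(1 + O(g(x)) + O(h(x))) as x → ∞. -/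
open Filter Asymptotics MeasureTheory

/-- The Mellin convolution of two measurable functions on `(0,∞)`:
`f ⋆_M g (x) = ∫_0^∞ f(x/t) g(t) dt/t`. -/
noncomputable def mellinConv (f g : ℝ → ℝ) (x : ℝ) : ℝ :=
  ∫ t in Set.Ioi (0:ℝ), f (x / t) * g t / t

/-- The Mellin transform of a function on `(0,∞)` at a real point `s`:
`MU(s) = ∫_0^∞ t^{−s} U(t) dt/t`. -/
noncomputable def mellinT (U : ℝ → ℝ) (s : ℝ) : ℝ :=
  ∫ t in Set.Ioi (0:ℝ), t ^ (-s) * U t / t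

/-!
In the logarithmic coordinate `t = log x`, slow variation of `l` with remainder `g` says that each
fixed increment of `log l(eᵗ)` is `O(g(eᵗ))`. Given a sequence of points violating uniformity, the
set of shifts in `[0, 2]` that are under control from its `k`-th point on has measure close to `2`
for large `k`, so it meets any translate of such a set by at most `1`; the triangle inequality makes
the bound uniform in the shift. Chaining unit steps gives, for every `δ > 0` and all large `x`, `t`,
`|l(t) - l(x)| ≲ max(t/x, x/t)^δ · l(x) g(x)`, together with the Potter bounds.

Hence `|f(t) - t^ρ l(x)| ≲ x^ρ l(x) (g(x) + h(x)) ((t/x)^σ + (t/x)^τ)` for all large `x` and *every*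
`t > 0`: bounded `t` cost only `x^σ`, which is `O(x^ρ l(x) g(x))` because `σ < ρ` while `l` and `g`
decay slower than any power. Integrating this against `U(x/t) dt/t` gives the theorem, since
`U ⋆_M t^s (x) = MU(s) x^s`.
-/

section UniformBound

variable {E : Type*} [PseudoMetricSpace E] {F : ℝ → E} {γ : ℝ → ℝ} {c : ℕ → ℝ} {r : ℕ → ℝ}

/-- The shifts `u ∈ [0, 2]` for which, along the sequence `r`, the increment of `F` from `r n` to
`r n + u` is at most `c k * γ (r n)` for all `n ≥ k`. The uniform bound comes from the fact that
these sets exhaust `[0, 2]` as `k` grows. -/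
def controlledShifts (F : ℝ → E) (γ : ℝ → ℝ) (c r : ℕ → ℝ) (k : ℕ) : Set ℝ :=
  Set.Icc 0 2 ∩ {u | ∀ n ≥ k, dist (F (r n + u)) (F (r n)) ≤ c k * γ (r n)}

lemma measurableSet_controlledShifts [MeasurableSpace E] [OpensMeasurableSpace E]
    (hF : Measurable F) (k : ℕ) : MeasurableSet (controlledShifts F γ c r k) := by
  refine measurableSet_Icc.inter ?_
  simp only [Set.ofPred_forall]
  exact MeasurableSet.iInter fun n => MeasurableSet.iInter fun _ =>
    (hF.comp (measurable_const_add (r n))) Metric.isClosed_closedBall.measurableSet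

lemma monotone_controlledShifts (hc : Monotone c) (hγ : ∀ t, 0 ≤ γ t) :
    Monotone (controlledShifts F γ c r) := fun _ _ hjk _ hu =>
  ⟨hu.1, fun n hn => (hu.2 n (hjk.trans hn)).trans
    (mul_le_mul_of_nonneg_right (hc hjk) (hγ _))⟩

lemma iUnion_controlledShifts (hc : Monotone c) (hγ : ∀ t, 0 ≤ γ t) (hr : Tendsto r atTop atTop)
    (H : ∀ s, 0 ≤ s → ∃ K, ∀ᶠ t in atTop, dist (F (t + s)) (F t) ≤ c K * γ t) :
    ⋃ k, controlledShifts F γ c r k = Set.Icc 0 2 := by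
  refine (Set.iUnion_subset fun k => Set.inter_subset_left).antisymm fun u hu => ?_
  obtain ⟨K, hK⟩ := H u hu.1
  obtain ⟨N, hN⟩ := eventually_atTop.1 (hr.eventually hK)
  refine Set.mem_iUnion.2 ⟨max K N, hu, fun n hn => (hN n (le_of_max_le_right hn)).trans ?_⟩
  exact mul_le_mul_of_nonneg_right (hc (le_max_left K N)) (hγ _)

lemma eventually_exists_mem_and_sub_mem {A B : ℕ → Set ℝ} {s : ℕ → ℝ}
    (hA : Monotone A) (hAU : ⋃ k, A k = Set.Icc 0 2)
    (hB : Monotone B) (hBU : ⋃ k, B k = Set.Icc 0 2) (hBm : ∀ k, MeasurableSet (B k))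
    (hs : ∀ k, s k ∈ Set.Icc (0 : ℝ) 1) :
    ∀ᶠ k in atTop, ∃ u ∈ A k, u - s k ∈ B k := by
  have volume_gt {A : ℕ → Set ℝ} (hA : Monotone A) (hAU : ⋃ k, A k = Set.Icc 0 2) :
      ∀ᶠ k in atTop, ENNReal.ofReal (3 / 2) < volume (A k) := by
    refine (tendsto_measure_iUnion_atTop (μ := volume) hA).eventually (lt_mem_nhds ?_)
    rw [hAU, Real.volume_Icc, ENNReal.ofReal_lt_ofReal_iff] <;> norm_num
  filter_upwards [volume_gt hA hAU, volume_gt hB hBU] with k hAk hBk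
  have hA_subset : A k ⊆ Set.Icc 0 3 :=
    (Set.subset_iUnion A k).trans (hAU.trans_subset (Set.Icc_subset_Icc_right (by norm_num)))
  have hB_subset : (· - s k) ⁻¹' B k ⊆ Set.Icc 0 3 := fun u hu => by
    obtain ⟨h0, h2⟩ : u - s k ∈ Set.Icc 0 2 := hBU ▸ Set.mem_iUnion_of_mem k hu
    constructor <;> linarith [(hs k).1, (hs k).2]
  refine nonempty_inter_of_measure_lt_add volume (measurable_sub_const (s k) (hBm k))
    hA_subset hB_subset ?_
  calc volume (Set.Icc (0 : ℝ) 3) = ENNReal.ofReal (3 / 2) + ENNReal.ofReal (3 / 2) := by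
        rw [Real.volume_Icc, ← ENNReal.ofReal_add] <;> norm_num
    _ < volume (A k) + volume ((· - s k) ⁻¹' B k) := by
        rw [show volume ((· - s k) ⁻¹' B k) = volume (B k) by
          simpa only [sub_eq_add_neg] using measure_preimage_add_right volume (-s k) (B k)]
        exact ENNReal.add_lt_add hAk hBk

-- Letting the constant `c K` depend on the shift covers both the `o(1)` and the `O(γ)` form of the
-- uniform convergence theorem.
theorem exists_eventually_forall_dist_add_le [MeasurableSpace E] [OpensMeasurableSpace E]
    (hF : Measurable F) (hc : Monotone c) (hγ : ∀ t, 0 ≤ γ t)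
    (H : ∀ s, 0 ≤ s → ∃ K, ∀ᶠ t in atTop, dist (F (t + s)) (F t) ≤ c K * γ t) :
    ∃ K, ∀ᶠ t in atTop, ∀ s ∈ Set.Icc (0 : ℝ) 1,
      dist (F (t + s)) (F t) ≤ c K * (γ t + γ (t + s)) := by
  by_contra! hcon
  have hbad (k : ℕ) : ∃ t, (k : ℝ) ≤ t ∧ ∃ s ∈ Set.Icc (0 : ℝ) 1,
      c k * (γ t + γ (t + s)) < dist (F (t + s)) (F t) :=
    frequently_atTop.1 (hcon k) k
  choose t ht s hs hlt using hbad
  have ht_top : Tendsto t atTop atTop := tendsto_atTop_mono ht tendsto_natCast_atTop_atTop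
  have hts_top : Tendsto (fun n => t n + s n) atTop atTop :=
    tendsto_atTop_mono (fun n => le_add_of_nonneg_right (hs n).1) ht_top
  obtain ⟨k, u, hu, hv⟩ := (eventually_exists_mem_and_sub_mem
    (monotone_controlledShifts hc hγ) (iUnion_controlledShifts hc hγ ht_top H)
    (monotone_controlledShifts hc hγ) (iUnion_controlledShifts hc hγ hts_top H)
    (measurableSet_controlledShifts hF) hs).exists
  have hut := hu.2 k le_rfl
  have hus := hv.2 k le_rfl
  rw [add_add_sub_cancel] at hus
  exact (hlt k).not_ge <| calc
    dist (F (t k + s k)) (F (t k))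
      ≤ dist (F (t k + u)) (F (t k + s k)) + dist (F (t k + u)) (F (t k)) :=
        dist_triangle_left _ _ _
    _ ≤ c k * (γ (t k) + γ (t k + s k)) := by linarith

lemma dist_le_of_forall_dist_add_le {a b M : ℝ}
    (H : ∀ u ∈ Set.uIcc a b, ∀ s ∈ Set.Icc (0 : ℝ) 1, dist (F (u + s)) (F u) ≤ M) :
    dist (F a) (F b) ≤ (dist a b + 1) * M := by
  wlog hab : a ≤ b generalizing a b
  · rw [dist_comm (F a), dist_comm a]
    exact this (Set.uIcc_comm a b ▸ H) (le_of_not_ge hab)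
  rw [Set.uIcc_of_le hab] at H
  have hM : 0 ≤ M := dist_nonneg.trans (H a (Set.left_mem_Icc.2 hab) 0 (by simp))
  set n := ⌊b - a⌋₊ + 1 with hn
  have hn0 : (0 : ℝ) < n := by positivity
  have hn_le : (n : ℝ) ≤ dist a b + 1 := by
    rw [dist_comm, Real.dist_eq, abs_of_nonneg (sub_nonneg.2 hab), hn, Nat.cast_add_one]
    gcongr
    exact Nat.floor_le (sub_nonneg.2 hab)
  set s := (b - a) / n
  have hs_mem : s ∈ Set.Icc (0 : ℝ) 1 := by
    refine ⟨div_nonneg (sub_nonneg.2 hab) hn0.le, (div_le_one hn0).2 ?_⟩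
    exact_mod_cast (Nat.lt_floor_add_one (b - a)).le
  have hns : n * s = b - a := mul_div_cancel₀ _ hn0.ne'
  have hstep {k : ℕ} (hk : k < n) :
      dist (F (a + k * s)) (F (a + (k + 1 : ℕ) * s)) ≤ M := by
    have hks : k * s ≤ n * s := by gcongr
    rw [dist_comm, Nat.cast_add_one, add_one_mul, ← add_assoc]
    exact H _ ⟨le_add_of_nonneg_right (mul_nonneg k.cast_nonneg hs_mem.1), by linarith⟩ s hs_mem
  calc dist (F a) (F b) ≤ ∑ _i ∈ Finset.range n, M := by
        simpa [hns] using dist_le_range_sum_of_dist_le (f := fun k : ℕ => F (a + k * s)) n hstep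
    _ = n * M := by simp
    _ ≤ (dist a b + 1) * M := by gcongr

end UniformBound

section SlowVariation

open Topology

/-- A slowly varying function at infinity (the class `R₀`), defined on all of `ℝ`. Only dilations
by `c > 1` are required: those by `c < 1` follow by substituting `x / c` for `x`. -/
structure IsSlowlyVarying (L : ℝ → ℝ) : Prop where
  measurable : Measurable L
  nonneg : ∀ x, 0 ≤ L x
  tendsto_div : ∀ c, 1 < c → Tendsto (fun x => L (c * x) / L x) atTop (𝓝 1)

/-- A slowly varying function `l` with remainder `g` (the class `R₀^g`). -/
structure IsSlowlyVaryingWithRemainder (l g : ℝ → ℝ) : Prop where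
  measurable : Measurable l
  nonneg : ∀ x, 0 ≤ l x
  tendsto_remainder : Tendsto g atTop (𝓝 0)
  isBigO : ∀ c, 1 < c → (fun x => l (c * x) / l x - 1) =O[atTop] g

/-- The function `t ↦ log L(eᵗ)`, in terms of which slow variation of `L` is a statement about
additive increments. -/
noncomputable def logCoord (L : ℝ → ℝ) (t : ℝ) : ℝ := Real.log (L (Real.exp t))

lemma measurable_logCoord {L : ℝ → ℝ} (hL : Measurable L) : Measurable (logCoord L) :=
  (hL.comp Real.measurable_exp).log

lemma le_exp_mul_of_dist_logCoord_le {L : ℝ → ℝ} {a b r : ℝ} (ha : 0 < L (Real.exp a))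
    (hb : 0 < L (Real.exp b)) (h : dist (logCoord L a) (logCoord L b) ≤ r) :
    L (Real.exp b) ≤ Real.exp r * L (Real.exp a) := by
  rw [← Real.log_le_log_iff hb (by positivity), Real.log_mul (Real.exp_ne_zero r) ha.ne',
    Real.log_exp, ← sub_le_iff_le_add]
  rw [dist_comm] at h
  exact (le_abs_self _).trans h

lemma abs_exp_sub_one_le_mul_exp (x : ℝ) : |Real.exp x - 1| ≤ |x| * Real.exp |x| := by
  have h := Complex.norm_exp_sub_sum_le_norm_mul_exp x 1
  rw [Finset.sum_range_one, pow_zero, Nat.factorial_zero, Nat.cast_one, div_one, pow_one] at h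
  exact_mod_cast h

lemma abs_sub_le_mul_dist_logCoord {L : ℝ → ℝ} {a b : ℝ} (ha : 0 < L (Real.exp a))
    (hb : 0 < L (Real.exp b)) :
    |L (Real.exp b) - L (Real.exp a)| ≤ L (Real.exp a) *
      (dist (logCoord L a) (logCoord L b) * Real.exp (dist (logCoord L a) (logCoord L b))) := by
  have hlb : L (Real.exp b) = L (Real.exp a) * Real.exp (logCoord L b - logCoord L a) := by
    rw [Real.exp_sub, logCoord, logCoord, Real.exp_log ha, Real.exp_log hb,
      mul_div_cancel₀ _ ha.ne']
  rw [hlb, ← mul_sub_one, abs_mul, abs_of_pos ha, dist_comm, Real.dist_eq]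
  exact mul_le_mul_of_nonneg_left (abs_exp_sub_one_le_mul_exp _) ha.le

lemma eventually_forall_ge_of_comp_exp {P : ℝ → ℝ → Prop}
    (H : ∀ᶠ T in atTop, ∀ a ≥ T, ∀ b ≥ T, P (Real.exp a) (Real.exp b)) :
    ∀ᶠ X in atTop, ∀ x ≥ X, ∀ y ≥ X, P x y := by
  filter_upwards [Real.tendsto_log_atTop.eventually H, eventually_gt_atTop 0]
    with X hX hX0 x hx y hy
  have h := hX _ (Real.log_le_log hX0 hx) _ (Real.log_le_log hX0 hy)
  rwa [Real.exp_log (hX0.trans_le hx), Real.exp_log (hX0.trans_le hy)] at h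

namespace IsSlowlyVarying

variable {L : ℝ → ℝ}

lemma eventually_pos (hL : IsSlowlyVarying L) : ∀ᶠ x in atTop, 0 < L x := by
  filter_upwards [(hL.tendsto_div 2 one_lt_two).eventually_ne one_ne_zero] with x hx
  exact (hL.nonneg x).lt_of_ne' fun h => hx (by simp [h])

lemma eventually_logCoord_add_sub (hL : IsSlowlyVarying L) (s : ℝ) :
    ∀ᶠ t in atTop, logCoord L (t + s) - logCoord L t =
      Real.log (L (Real.exp s * Real.exp t) / L (Real.exp t)) := by
  have hpos := Real.tendsto_exp_atTop.eventually hL.eventually_pos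
  have hpos_shift : ∀ᶠ t in atTop, 0 < L (Real.exp (t + s)) :=
    (tendsto_atTop_add_const_right atTop s tendsto_id).eventually hpos
  filter_upwards [hpos, hpos_shift] with t ht hts
  rw [← Real.exp_add, add_comm s t, Real.log_div hts.ne' ht.ne']
  rfl

lemma tendsto_logCoord_add_sub (hL : IsSlowlyVarying L) {s : ℝ} (hs : 0 < s) :
    Tendsto (fun t => logCoord L (t + s) - logCoord L t) atTop (𝓝 0) := by
  have h := ((hL.tendsto_div _ (Real.one_lt_exp_iff.2 hs)).log one_ne_zero).comp
    Real.tendsto_exp_atTop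
  rw [Real.log_one] at h
  exact h.congr' ((hL.eventually_logCoord_add_sub s).mono fun _ => Eq.symm)

lemma eventually_dist_logCoord_le (hL : IsSlowlyVarying L) {ε : ℝ} (hε : 0 < ε) :
    ∀ᶠ T in atTop, ∀ a ≥ T, ∀ b ≥ T,
      dist (logCoord L a) (logCoord L b) ≤ (dist a b + 1) * ε := by
  have hshift (s : ℝ) (hs : 0 ≤ s) :
      ∀ᶠ t in atTop, dist (logCoord L (t + s)) (logCoord L t) ≤ ε / 2 := by
    rcases hs.eq_or_lt with rfl | hs
    · simp [(half_pos hε).le]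
    · filter_upwards [Metric.tendsto_nhds.1 (hL.tendsto_logCoord_add_sub hs) _ (half_pos hε)]
        with t ht
      rw [dist_zero_right, ← dist_eq_norm] at ht
      exact ht.le
  obtain ⟨-, hunif⟩ := exists_eventually_forall_dist_add_le (c := fun _ => ε / 2) (γ := 1)
    (measurable_logCoord hL.measurable) monotone_const (fun _ => zero_le_one)
    fun s hs => ⟨0, by simpa using hshift s hs⟩
  filter_upwards [eventually_forall_ge_atTop.2 hunif] with T hT a ha b hb
  refine dist_le_of_forall_dist_add_le fun u hu s hs => ?_
  refine (hT u ((le_min ha hb).trans hu.1) s hs).trans_eq ?_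
  simp only [Pi.one_apply]
  ring

lemma eventually_le_exp_mul (hL : IsSlowlyVarying L) {ε : ℝ} (hε : 0 < ε) :
    ∀ᶠ T in atTop, ∀ a ≥ T, ∀ b ≥ T,
      L (Real.exp b) ≤ Real.exp ((dist a b + 1) * ε) * L (Real.exp a) := by
  filter_upwards [hL.eventually_dist_logCoord_le hε,
    eventually_forall_ge_atTop.2 (Real.tendsto_exp_atTop.eventually hL.eventually_pos)]
    with T hT hpos a ha b hb
  exact le_exp_mul_of_dist_logCoord_le (hpos a ha) (hpos b hb) (hT a ha b hb)

theorem exists_potter_bound (hL : IsSlowlyVarying L) {δ : ℝ} (hδ : 0 < δ) :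
    ∃ C, 0 ≤ C ∧ ∀ᶠ X in atTop, ∀ x ≥ X, ∀ y ≥ X,
      L y ≤ C * Real.exp (δ * dist (Real.log x) (Real.log y)) * L x := by
  refine ⟨Real.exp δ, (Real.exp_pos δ).le, eventually_forall_ge_of_comp_exp ?_⟩
  filter_upwards [hL.eventually_le_exp_mul hδ] with T hT a ha b hb
  simp only [Real.log_exp]
  rw [← Real.exp_add]
  convert hT a ha b hb using 3
  ring

lemma isBigO_rpow_neg (hL : IsSlowlyVarying L) {δ : ℝ} (hδ : 0 < δ) :
    (fun x : ℝ => x ^ (-δ)) =O[atTop] L := by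
  obtain ⟨C, -, hC⟩ := hL.exists_potter_bound hδ
  obtain ⟨X, hX, hpos, hX0⟩ := (hC.and (hL.eventually_pos.and (eventually_gt_atTop 0))).exists
  refine IsBigO.of_bound (C * X ^ (-δ) / L X) ?_
  filter_upwards [eventually_ge_atTop X] with x hx
  have hx0 : 0 < x := hX0.trans_le hx
  have hdist : Real.exp (δ * dist (Real.log x) (Real.log X)) = X ^ (-δ) / x ^ (-δ) := by
    rw [Real.dist_eq, abs_of_nonneg (sub_nonneg.2 (Real.log_le_log hX0 hx)),
      Real.rpow_def_of_pos hX0, Real.rpow_def_of_pos hx0, ← Real.exp_sub]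
    ring_nf
  have h := hX x hx X le_rfl
  rw [hdist, mul_div_assoc', div_mul_eq_mul_div, le_div_iff₀ (by positivity)] at h
  rw [Real.norm_of_nonneg (by positivity), Real.norm_of_nonneg (hL.nonneg x), div_mul_eq_mul_div,
    le_div_iff₀' hpos]
  exact h

end IsSlowlyVarying

lemma add_one_mul_exp_le {ε : ℝ} (hε : 0 < ε) (d : ℝ) :
    (d + 1) * Real.exp ((d + 1) * ε) ≤ ε⁻¹ * Real.exp (2 * ((d + 1) * ε)) := by
  have h : d + 1 ≤ ε⁻¹ * Real.exp ((d + 1) * ε) := by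
    rw [inv_mul_eq_div, le_div_iff₀ hε]
    linarith [Real.add_one_le_exp ((d + 1) * ε)]
  calc (d + 1) * Real.exp ((d + 1) * ε)
      ≤ ε⁻¹ * Real.exp ((d + 1) * ε) * Real.exp ((d + 1) * ε) := by gcongr
    _ = ε⁻¹ * Real.exp (2 * ((d + 1) * ε)) := by rw [mul_assoc, ← Real.exp_add, two_mul]

namespace IsSlowlyVaryingWithRemainder

variable {l g : ℝ → ℝ}

lemma isSlowlyVarying (hl : IsSlowlyVaryingWithRemainder l g) : IsSlowlyVarying l where
  measurable := hl.measurable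
  nonneg := hl.nonneg
  tendsto_div c hc := by
    simpa using ((hl.isBigO c hc).trans_tendsto hl.tendsto_remainder).add_const 1

lemma isBigO_logCoord_add_sub (hl : IsSlowlyVaryingWithRemainder l g) {s : ℝ} (hs : 0 < s) :
    (fun t => logCoord l (t + s) - logCoord l t) =O[atTop] fun t => g (Real.exp t) := by
  have hc : 1 < Real.exp s := Real.one_lt_exp_iff.2 hs
  have hlog : (fun x => Real.log (l (Real.exp s * x) / l x)) =O[atTop] g := by
    have h := (Real.differentiableAt_log one_ne_zero).isBigO_sub.comp_tendsto
      (hl.isSlowlyVarying.tendsto_div _ hc)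
    simp only [Function.comp_def, Real.log_one, sub_zero] at h
    exact h.trans (hl.isBigO _ hc)
  exact (hlog.comp_tendsto Real.tendsto_exp_atTop).congr'
    ((hl.isSlowlyVarying.eventually_logCoord_add_sub s).mono fun _ => Eq.symm) .rfl

lemma exists_eventually_forall_dist_logCoord_add_le (hl : IsSlowlyVaryingWithRemainder l g)
    (hg : IsSlowlyVarying g) :
    ∃ C, 0 ≤ C ∧ ∀ᶠ t in atTop, ∀ s ∈ Set.Icc (0 : ℝ) 1,
      dist (logCoord l (t + s)) (logCoord l t) ≤ C * g (Real.exp t) := by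
  have hshift (s : ℝ) (hs : 0 ≤ s) : ∃ K : ℕ, ∀ᶠ t in atTop,
      dist (logCoord l (t + s)) (logCoord l t) ≤ K * g (Real.exp t) := by
    rcases hs.eq_or_lt with rfl | hs
    · exact ⟨0, by simp⟩
    obtain ⟨c, hc⟩ := (hl.isBigO_logCoord_add_sub hs).bound
    refine ⟨⌈c⌉₊, hc.mono fun t ht => ?_⟩
    rw [← dist_eq_norm, Real.norm_of_nonneg (hg.nonneg _)] at ht
    exact ht.trans (mul_le_mul_of_nonneg_right (Nat.le_ceil c) (hg.nonneg _))
  obtain ⟨K, hK⟩ := exists_eventually_forall_dist_add_le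
    (measurable_logCoord hl.measurable) Nat.mono_cast (fun t => hg.nonneg (Real.exp t)) hshift
  refine ⟨K * (1 + Real.exp 2), by positivity, ?_⟩
  filter_upwards [hK, hg.eventually_le_exp_mul one_pos] with t ht hpotter s hs
  have hg_shift : g (Real.exp (t + s)) ≤ Real.exp 2 * g (Real.exp t) := by
    refine (hpotter t le_rfl (t + s) (le_add_of_nonneg_right hs.1)).trans ?_
    have := hg.nonneg (Real.exp t)
    gcongr
    rw [dist_self_add_right, Real.norm_of_nonneg hs.1]
    linarith [hs.2]
  refine (ht s hs).trans ?_
  rw [mul_assoc, one_add_mul]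
  gcongr

theorem exists_eventually_dist_logCoord_le (hl : IsSlowlyVaryingWithRemainder l g)
    (hg : IsSlowlyVarying g) {ε : ℝ} (hε : 0 < ε) :
    ∃ C, 0 ≤ C ∧ ∀ᶠ T in atTop, ∀ a ≥ T, ∀ b ≥ T,
      dist (logCoord l a) (logCoord l b) ≤
        C * Real.exp (2 * ((dist a b + 1) * ε)) * g (Real.exp a) := by
  obtain ⟨C, hC0, hC⟩ := hl.exists_eventually_forall_dist_logCoord_add_le hg
  refine ⟨C * ε⁻¹, by positivity, ?_⟩
  filter_upwards [eventually_forall_ge_atTop.2 hC, hg.eventually_le_exp_mul hε]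
    with T hT hpotter a ha b hb
  have hga := hg.nonneg (Real.exp a)
  have hstep : ∀ u ∈ Set.uIcc a b, ∀ s ∈ Set.Icc (0 : ℝ) 1,
      dist (logCoord l (u + s)) (logCoord l u) ≤
        C * (Real.exp ((dist a b + 1) * ε) * g (Real.exp a)) := by
    intro u hu s hs
    have huT : T ≤ u := (le_min ha hb).trans hu.1
    refine (hT u huT s hs).trans (mul_le_mul_of_nonneg_left ?_ hC0)
    refine (hpotter a ha u huT).trans ?_
    gcongr
    exact Real.dist_left_le_of_mem_uIcc hu
  calc dist (logCoord l a) (logCoord l b)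
      ≤ (dist a b + 1) * (C * (Real.exp ((dist a b + 1) * ε) * g (Real.exp a))) :=
        dist_le_of_forall_dist_add_le hstep
    _ = C * ((dist a b + 1) * Real.exp ((dist a b + 1) * ε)) * g (Real.exp a) := by ring
    _ ≤ C * (ε⁻¹ * Real.exp (2 * ((dist a b + 1) * ε))) * g (Real.exp a) := by
        gcongr C * ?_ * g (Real.exp a)
        exact add_one_mul_exp_le hε _
    _ = C * ε⁻¹ * Real.exp (2 * ((dist a b + 1) * ε)) * g (Real.exp a) := by ring

theorem exists_abs_sub_le (hl : IsSlowlyVaryingWithRemainder l g) (hg : IsSlowlyVarying g)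
    {δ : ℝ} (hδ : 0 < δ) :
    ∃ C, 0 ≤ C ∧ ∀ᶠ X in atTop, ∀ x ≥ X, ∀ y ≥ X,
      |l y - l x| ≤ C * Real.exp (δ * dist (Real.log x) (Real.log y)) * (l x * g x) := by
  obtain ⟨C, hC0, hC⟩ := hl.exists_eventually_dist_logCoord_le hg (ε := δ / 3) (by positivity)
  refine ⟨C * Real.exp δ, by positivity, eventually_forall_ge_of_comp_exp ?_⟩
  have hpos := Real.tendsto_exp_atTop.eventually hl.isSlowlyVarying.eventually_pos
  filter_upwards [hC, eventually_forall_ge_atTop.2 hpos,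
    hl.isSlowlyVarying.eventually_dist_logCoord_le (ε := δ / 3) (by positivity)]
    with T hT hpos hpotter a ha b hb
  simp only [Real.log_exp]
  have hga := hg.nonneg (Real.exp a)
  have hla := hl.nonneg (Real.exp a)
  calc |l (Real.exp b) - l (Real.exp a)|
      ≤ l (Real.exp a) * (dist (logCoord l a) (logCoord l b) *
          Real.exp (dist (logCoord l a) (logCoord l b))) :=
        abs_sub_le_mul_dist_logCoord (hpos a ha) (hpos b hb)
    _ ≤ l (Real.exp a) * (C * Real.exp (2 * ((dist a b + 1) * (δ / 3))) * g (Real.exp a) *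
          Real.exp ((dist a b + 1) * (δ / 3))) := by
        gcongr
        exacts [hT a ha b hb, hpotter a ha b hb]
    _ = C * (Real.exp (2 * ((dist a b + 1) * (δ / 3))) * Real.exp ((dist a b + 1) * (δ / 3))) *
          (l (Real.exp a) * g (Real.exp a)) := by ring
    _ = C * (Real.exp δ * Real.exp (δ * dist a b)) * (l (Real.exp a) * g (Real.exp a)) := by
        rw [← Real.exp_add, ← Real.exp_add]
        ring_nf
    _ = C * Real.exp δ * Real.exp (δ * dist a b) * (l (Real.exp a) * g (Real.exp a)) := by ring

end IsSlowlyVaryingWithRemainder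

end SlowVariation

section ZygmundClass

/-- A function of the Zygmund class: nonnegative, with `x ^ α * h x` ultimately increasing and
`x ^ (-α) * h x` ultimately decreasing for every `α > 0`. -/
structure IsZygmund (h : ℝ → ℝ) : Prop where
  nonneg : ∀ x, 0 ≤ h x
  monotoneOn : ∀ α : ℝ, 0 < α → ∃ x₁, MonotoneOn (fun x => x ^ α * h x) (Set.Ici x₁)
  antitoneOn : ∀ α : ℝ, 0 < α → ∃ x₁, AntitoneOn (fun x => x ^ (-α) * h x) (Set.Ici x₁)

lemma le_exp_mul_of_rpow_mul_le {x y u v α : ℝ} (hx : 0 < x) (hy : 0 < y) (hu : 0 ≤ u)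
    (h : y ^ α * v ≤ x ^ α * u) :
    v ≤ Real.exp (|α| * dist (Real.log x) (Real.log y)) * u := by
  have hα : α * (Real.log x - Real.log y) ≤ |α| * dist (Real.log x) (Real.log y) := by
    rw [Real.dist_eq, ← abs_mul]
    exact le_abs_self _
  calc v ≤ x ^ α * u / y ^ α := (le_div_iff₀' (by positivity)).2 h
    _ = Real.exp (α * (Real.log x - Real.log y)) * u := by
        rw [mul_div_right_comm, Real.rpow_def_of_pos hx, Real.rpow_def_of_pos hy, ← Real.exp_sub]
        ring_nf
    _ ≤ Real.exp (|α| * dist (Real.log x) (Real.log y)) * u := by gcongr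

lemma IsZygmund.eventually_le_exp_mul {h : ℝ → ℝ} (hh : IsZygmund h) {δ : ℝ} (hδ : 0 < δ) :
    ∀ᶠ X in atTop, ∀ x ≥ X, ∀ y ≥ X,
      h y ≤ Real.exp (δ * dist (Real.log x) (Real.log y)) * h x := by
  obtain ⟨x₁, hmono⟩ := hh.monotoneOn δ hδ
  obtain ⟨x₂, hanti⟩ := hh.antitoneOn δ hδ
  filter_upwards [eventually_ge_atTop x₁, eventually_ge_atTop x₂, eventually_gt_atTop 0]
    with X hX₁ hX₂ hX0 x hx y hy
  have hx0 : 0 < x := hX0.trans_le hx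
  have hy0 : 0 < y := hX0.trans_le hy
  rcases le_total y x with hyx | hxy
  · simpa only [abs_of_pos hδ] using le_exp_mul_of_rpow_mul_le hx0 hy0 (hh.nonneg x)
      (hmono (hX₁.trans hy) (hX₁.trans hx) hyx)
  · simpa only [abs_neg, abs_of_pos hδ] using le_exp_mul_of_rpow_mul_le hx0 hy0 (hh.nonneg x)
      (hanti (hX₂.trans hx) (hX₂.trans hy) hxy)

end ZygmundClass

section PointwiseBound

variable {f l g h : ℝ → ℝ} {σ τ ρ : ℝ}

lemma rpow_mul_exp_dist_log_le {x t η : ℝ} (hx : 0 < x) (ht : 0 < t) (hσ : σ ≤ ρ - η)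
    (hτ : ρ + η ≤ τ) :
    t ^ ρ * Real.exp (η * dist (Real.log x) (Real.log t)) ≤
      x ^ ρ * ((t / x) ^ σ + (t / x) ^ τ) := by
  have hq : 0 < t / x := div_pos ht hx
  have htρ : t ^ ρ = x ^ ρ * (t / x) ^ ρ := by
    rw [← Real.mul_rpow hx.le hq.le, mul_div_cancel₀ _ hx.ne']
  have hdist : dist (Real.log x) (Real.log t) = |Real.log (t / x)| := by
    rw [Real.log_div ht.ne' hx.ne', dist_comm, Real.dist_eq]
  rw [htρ, hdist, mul_assoc]
  gcongr
  simp only [Real.rpow_def_of_pos hq, ← Real.exp_add]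
  set L := Real.log (t / x)
  rcases le_total 0 L with hL | hL
  · refine (Real.exp_le_exp.2 ?_).trans (le_add_of_nonneg_left (Real.exp_pos (L * σ)).le)
    rw [abs_of_nonneg hL]
    linarith [mul_le_mul_of_nonneg_left hτ hL]
  · refine (Real.exp_le_exp.2 ?_).trans (le_add_of_nonneg_right (Real.exp_pos (L * τ)).le)
    rw [abs_of_nonpos hL]
    linarith [mul_le_mul_of_nonpos_left hσ hL]

lemma abs_sub_mul_le_of_relative_bounds {y p l₁ l₂ g₂ h₁ h₂ e Cf Cl Cr : ℝ} (hp : 0 ≤ p)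
    (hl₂ : 0 ≤ l₂) (hg₂ : 0 ≤ g₂) (hh₁ : 0 ≤ h₁) (hh₂ : 0 ≤ h₂) (he : 1 ≤ e) (hCf : 0 ≤ Cf)
    (hCl : 0 ≤ Cl) (hCr : 0 ≤ Cr) (hy : |y - p * l₁| ≤ Cf * (p * l₁ * h₁))
    (hl : l₁ ≤ Cl * e * l₂) (hl_sub : |l₁ - l₂| ≤ Cr * e * (l₂ * g₂)) (hh : h₁ ≤ e * h₂) :
    |y - p * l₂| ≤ (Cr + Cf * Cl) * (l₂ * (g₂ + h₂)) * (p * e ^ 2) :=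
  calc |y - p * l₂| ≤ |y - p * l₁| + |p * l₁ - p * l₂| := abs_sub_le _ _ _
    _ ≤ Cf * (p * l₁ * h₁) + p * |l₁ - l₂| := by
        rw [← mul_sub, abs_mul, abs_of_nonneg hp]
        gcongr
    _ ≤ Cf * (p * (Cl * e * l₂) * (e * h₂)) + p * (Cr * e * (l₂ * g₂)) := by gcongr
    _ = p * l₂ * (Cf * Cl * h₂ * e ^ 2 + Cr * g₂ * e) := by ring
    _ ≤ p * l₂ * (Cf * Cl * (g₂ + h₂) * e ^ 2 + Cr * (g₂ + h₂) * e ^ 2) := by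
        gcongr
        exacts [le_add_of_nonneg_left hg₂, le_add_of_nonneg_right hh₂,
          le_self_pow₀ he two_ne_zero]
    _ = (Cr + Cf * Cl) * (l₂ * (g₂ + h₂)) * (p * e ^ 2) := by ring

lemma exists_abs_sub_rpow_mul_le_of_ge (hρ : ρ ∈ Set.Ioo σ τ)
    (hl : IsSlowlyVaryingWithRemainder l g) (hg : IsSlowlyVarying g) (hh : IsZygmund h)
    (hf : (fun x => f x - x ^ ρ * l x) =O[atTop] fun x => x ^ ρ * l x * h x) :
    ∃ C, 0 ≤ C ∧ ∀ᶠ X in atTop, ∀ x ≥ X, ∀ t ≥ X, |f t - t ^ ρ * l x| ≤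
      C * (x ^ ρ * l x * (g x + h x)) * ((t / x) ^ σ + (t / x) ^ τ) := by
  obtain ⟨δ, hδ, hδσ, hδτ⟩ : ∃ δ, 0 < δ ∧ σ ≤ ρ - 2 * δ ∧ ρ + 2 * δ ≤ τ := by
    obtain ⟨η, hη, hlt⟩ := exists_between (lt_min (sub_pos.2 hρ.1) (sub_pos.2 hρ.2))
    obtain ⟨hσ, hτ⟩ := lt_min_iff.1 hlt
    exact ⟨η / 2, half_pos hη, by linarith, by linarith⟩
  obtain ⟨Cf, hCf, hf⟩ := hf.exists_nonneg
  obtain ⟨Cr, hCr, hrem⟩ := hl.exists_abs_sub_le hg hδ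
  obtain ⟨Cl, hCl, hpotter⟩ := hl.isSlowlyVarying.exists_potter_bound hδ
  refine ⟨Cr + Cf * Cl, by positivity, ?_⟩
  filter_upwards [hrem, hpotter, hh.eventually_le_exp_mul hδ,
    eventually_forall_ge_atTop.2 hf.bound, eventually_gt_atTop 0]
    with X hrem hpotter hzyg hf hX0 x hx t ht
  have hx0 : 0 < x := hX0.trans_le hx
  have ht0 : 0 < t := hX0.trans_le ht
  have hlt := hl.nonneg t
  have hlx := hl.nonneg x
  have hht := hh.nonneg t
  have hhx := hh.nonneg x
  have hgx := hg.nonneg x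
  have hft := hf t ht
  rw [Real.norm_eq_abs, Real.norm_of_nonneg (by positivity)] at hft
  calc |f t - t ^ ρ * l x|
      ≤ (Cr + Cf * Cl) * (l x * (g x + h x)) *
          (t ^ ρ * Real.exp (δ * dist (Real.log x) (Real.log t)) ^ 2) :=
        abs_sub_mul_le_of_relative_bounds (by positivity) hlx hgx hht hhx
          (Real.one_le_exp (by positivity)) hCf hCl hCr hft (hpotter x hx t ht)
          (hrem x hx t ht) (hzyg x hx t ht)
    _ ≤ (Cr + Cf * Cl) * (l x * (g x + h x)) * (x ^ ρ * ((t / x) ^ σ + (t / x) ^ τ)) := by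
        rw [← Real.exp_nat_mul, Nat.cast_ofNat, ← mul_assoc 2]
        exact mul_le_mul_of_nonneg_left (rpow_mul_exp_dist_log_le hx0 ht0 hδσ hδτ)
          (by positivity)
    _ = (Cr + Cf * Cl) * (x ^ ρ * l x * (g x + h x)) * ((t / x) ^ σ + (t / x) ^ τ) := by ring

lemma IsSlowlyVarying.isBigO_rpow (hg : IsSlowlyVarying g) (hσρ : σ < ρ) :
    (fun x : ℝ => x ^ σ) =O[atTop] fun x => x ^ ρ * g x := by
  refine ((isBigO_refl (fun x : ℝ => x ^ ρ) atTop).mul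
    (hg.isBigO_rpow_neg (sub_pos.2 hσρ))).congr' ?_ .rfl
  filter_upwards [eventually_gt_atTop 0] with x hx
  rw [← Real.rpow_add hx]
  ring_nf

lemma isBigO_rpow_mul_const_add (hl : IsSlowlyVarying l) (hg : IsSlowlyVarying g) (hσρ : σ < ρ)
    (M K : ℝ) :
    (fun x => x ^ σ * (M + K * l x)) =O[atTop] fun x => x ^ ρ * l x * g x := by
  obtain ⟨κ, hσκ, hκρ⟩ := exists_between hσρ
  have hM : (fun x => M * x ^ σ) =O[atTop] fun x => x ^ ρ * l x * g x :=
    ((hg.isBigO_rpow hσκ).trans ((hl.isBigO_rpow hκρ).mul (isBigO_refl g atTop))).const_mul_left M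
  have hK : (fun x => K * (x ^ σ * l x)) =O[atTop] fun x => x ^ ρ * l x * g x :=
    (((hg.isBigO_rpow hσρ).mul (isBigO_refl l atTop)).const_mul_left K).congr_right
      fun x => mul_right_comm _ _ _
  exact (hM.add hK).congr_left fun x => by ring

lemma exists_abs_sub_rpow_mul_le_of_le {X : ℝ} (hσρ : σ < ρ) (hl : IsSlowlyVarying l)
    (hg : IsSlowlyVarying g) (hf : ∃ M, ∀ x ∈ Set.Ioc 0 X, |x ^ (-σ) * f x| ≤ M) :
    ∃ C, ∀ᶠ x in atTop, ∀ t ∈ Set.Ioc 0 X,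
      |f t - t ^ ρ * l x| ≤ C * (x ^ ρ * l x * g x) * (t / x) ^ σ := by
  obtain ⟨M, hM⟩ := hf
  obtain ⟨C, hC⟩ := (isBigO_rpow_mul_const_add hl hg hσρ M (X ^ (ρ - σ))).bound
  refine ⟨C, ?_⟩
  filter_upwards [hC, eventually_gt_atTop 0] with x hCx hx0 t ht
  obtain ⟨ht0, htX⟩ := ht
  have hlx := hl.nonneg x
  have hgx := hg.nonneg x
  rw [Real.norm_of_nonneg (by positivity : 0 ≤ x ^ ρ * l x * g x)] at hCx
  have hft : |f t| ≤ M * t ^ σ := by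
    have hMt := hM t ⟨ht0, htX⟩
    rwa [abs_mul, abs_of_pos (by positivity), Real.rpow_neg ht0.le, inv_mul_eq_div,
      div_le_iff₀ (by positivity)] at hMt
  have htρ : t ^ ρ ≤ t ^ σ * X ^ (ρ - σ) := by
    rw [← sub_add_cancel ρ σ, Real.rpow_add ht0, mul_comm, add_sub_cancel_right]
    gcongr
  calc |f t - t ^ ρ * l x| ≤ |f t| + |t ^ ρ * l x| := abs_sub _ _
    _ ≤ M * t ^ σ + t ^ σ * X ^ (ρ - σ) * l x := by
        rw [abs_of_nonneg (by positivity : 0 ≤ t ^ ρ * l x)]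
        gcongr
    _ = (t / x) ^ σ * (x ^ σ * (M + X ^ (ρ - σ) * l x)) := by
        rw [Real.div_rpow ht0.le hx0.le]
        field_simp
    _ ≤ (t / x) ^ σ * (C * (x ^ ρ * l x * g x)) := by
        exact mul_le_mul_of_nonneg_left ((le_abs_self _).trans hCx) (by positivity)
    _ = C * (x ^ ρ * l x * g x) * (t / x) ^ σ := mul_comm _ _

theorem exists_eventually_forall_abs_sub_rpow_mul_le (hρ : ρ ∈ Set.Ioo σ τ)
    (hl : IsSlowlyVaryingWithRemainder l g) (hg : IsSlowlyVarying g) (hh : IsZygmund h)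
    (hf : (fun x => f x - x ^ ρ * l x) =O[atTop] fun x => x ^ ρ * l x * h x)
    (hf_bdd : ∀ a : ℝ, 0 < a → ∃ M, ∀ x ∈ Set.Ioc 0 a, |x ^ (-σ) * f x| ≤ M) :
    ∃ C, ∀ᶠ x in atTop, ∀ t > 0, |f t - t ^ ρ * l x| ≤
      C * (x ^ ρ * l x * (g x + h x)) * ((t / x) ^ σ + (t / x) ^ τ) := by
  obtain ⟨C₁, hC₁, hfar⟩ := exists_abs_sub_rpow_mul_le_of_ge hρ hl hg hh hf
  obtain ⟨X, hfar, hX0⟩ := (hfar.and (eventually_gt_atTop 0)).exists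
  obtain ⟨C₂, hnear⟩ :=
    exists_abs_sub_rpow_mul_le_of_le hρ.1 hl.isSlowlyVarying hg (hf_bdd X hX0)
  refine ⟨max C₁ C₂, ?_⟩
  filter_upwards [hnear, eventually_ge_atTop X] with x hnear hx t ht0
  have hx0 : 0 < x := hX0.trans_le hx
  have hlx := hl.nonneg x
  have hgx := hg.nonneg x
  have hhx := hh.nonneg x
  rcases le_total X t with ht | ht
  · refine (hfar x hx t ht).trans ?_
    gcongr
    exact le_max_left _ _
  · refine (hnear t ⟨ht0, ht⟩).trans ?_
    gcongr
    exacts [le_max_right _ _, le_add_of_nonneg_right hhx,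
      le_add_of_nonneg_right (by positivity)]

end PointwiseBound

section Mellin

variable {U φ : ℝ → ℝ} {σ τ s x a b : ℝ}

/-- Absolute convergence at the real point `s` of the integral defining the Mellin transform
`mellinT U s`. -/
def MellinIntegrable (U : ℝ → ℝ) (s : ℝ) : Prop :=
  IntegrableOn (fun t => t ^ (-s) * U t / t) (Set.Ioi 0)

lemma MellinIntegrable.abs (hU : MellinIntegrable U s) :
    MellinIntegrable (fun t => |U t|) s := by
  refine IntegrableOn.congr_fun (Integrable.abs hU) (fun t (ht : 0 < t) => ?_) measurableSet_Ioi
  rw [abs_div, abs_mul, abs_of_pos ht, abs_of_pos (Real.rpow_pos_of_pos ht _)]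

lemma MellinIntegrable.of_mem_Icc (hUσ : MellinIntegrable U σ) (hUτ : MellinIntegrable U τ)
    (hs : s ∈ Set.Icc σ τ) : MellinIntegrable U s := by
  have hmeas : AEStronglyMeasurable (fun t => t ^ (-s) * U t / t)
      (volume.restrict (Set.Ioi 0)) := by
    have hpow : Measurable fun t : ℝ => t ^ (σ - s) := measurable_id.pow_const _
    refine (hpow.aestronglyMeasurable.mul hUσ.aestronglyMeasurable).congr ?_
    filter_upwards [ae_restrict_mem measurableSet_Ioi] with t ht
    rw [Pi.mul_apply, ← mul_div_assoc, ← mul_assoc, ← Real.rpow_add ht]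
    ring_nf
  refine Integrable.mono' (Integrable.add hUσ.abs hUτ.abs) hmeas ?_
  filter_upwards [ae_restrict_mem measurableSet_Ioi] with t (ht : 0 < t)
  have hpow : t ^ (-s) ≤ t ^ (-τ) + t ^ (-σ) := by
    simpa using rpow_mul_exp_dist_log_le (η := 0) one_pos ht
      (by simpa using hs.2 : -τ ≤ -s - 0) (by simpa using hs.1 : -s + 0 ≤ -σ)
  calc ‖t ^ (-s) * U t / t‖ = t ^ (-s) * |U t| / t := by
        rw [Real.norm_eq_abs, abs_div, abs_mul, abs_of_pos ht,
          abs_of_pos (Real.rpow_pos_of_pos ht _)]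
    _ ≤ (t ^ (-τ) + t ^ (-σ)) * |U t| / t := by gcongr
    _ = t ^ (-σ) * |U t| / t + t ^ (-τ) * |U t| / t := by ring

-- The left-hand side is the shape produced by substituting `t⁻¹` for `t` and then `x * t` for `t`.
lemma eqOn_smul_comp_mul_rpow_neg_one (hx : 0 < x) :
    Set.EqOn (fun t => (|(-1 : ℝ)| * t ^ ((-1 : ℝ) - 1)) •
        (x * (φ (x * t ^ (-1 : ℝ)) / (x * t ^ (-1 : ℝ)))))
      (fun t => φ (x / t) / t) (Set.Ioi 0) := by
  intro t (ht : 0 < t)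
  dsimp only
  rw [Real.rpow_sub_one ht.ne', Real.rpow_neg_one, abs_neg, abs_one, smul_eq_mul,
    ← div_eq_mul_inv]
  field_simp

lemma integrableOn_Ioi_comp_const_div_div_iff (hx : 0 < x) :
    IntegrableOn (fun t => φ (x / t) / t) (Set.Ioi 0) ↔
      IntegrableOn (fun u => φ u / u) (Set.Ioi 0) := by
  rw [← integrableOn_congr_fun (eqOn_smul_comp_mul_rpow_neg_one hx) measurableSet_Ioi,
    integrableOn_Ioi_comp_rpow_iff (fun u => x * (φ (x * u) / (x * u))) (by norm_num),
    IntegrableOn, integrable_const_mul_iff hx.ne'.isUnit, ← IntegrableOn,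
    integrableOn_Ioi_comp_mul_left_iff (fun u => φ u / u) 0 hx, mul_zero]

lemma integral_Ioi_comp_const_div_div (hx : 0 < x) :
    ∫ t in Set.Ioi 0, φ (x / t) / t = ∫ u in Set.Ioi 0, φ u / u := by
  rw [← setIntegral_congr_fun measurableSet_Ioi (eqOn_smul_comp_mul_rpow_neg_one hx),
    integral_comp_rpow_Ioi (fun u => x * (φ (x * u) / (x * u))) (by norm_num),
    integral_const_mul, integral_comp_mul_left_Ioi (fun u => φ u / u) 0 hx, mul_zero,
    smul_eq_mul, mul_inv_cancel_left₀ hx.ne']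

lemma eqOn_rpow_mul_comp_const_div (hx : 0 < x) :
    Set.EqOn (fun t => x ^ s * ((x / t) ^ (-s) * U (x / t) / t))
      (fun t => U (x / t) * t ^ s / t) (Set.Ioi 0) := by
  intro t (ht : 0 < t)
  dsimp only
  rw [Real.div_rpow hx.le ht.le, Real.rpow_neg hx.le, Real.rpow_neg ht.le]
  field_simp

lemma MellinIntegrable.integrableOn_comp_const_div_mul_rpow (hU : MellinIntegrable U s)
    (hx : 0 < x) : IntegrableOn (fun t => U (x / t) * t ^ s / t) (Set.Ioi 0) :=
  IntegrableOn.congr_fun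
    (((integrableOn_Ioi_comp_const_div_div_iff (φ := fun u => u ^ (-s) * U u) hx).2 hU).const_mul
      (x ^ s))
    (eqOn_rpow_mul_comp_const_div hx) measurableSet_Ioi

lemma mellinConv_rpow (hx : 0 < x) :
    mellinConv U (fun t => t ^ s) x = mellinT U s * x ^ s := by
  rw [mellinConv, ← setIntegral_congr_fun measurableSet_Ioi (eqOn_rpow_mul_comp_const_div hx),
    integral_const_mul,
    integral_Ioi_comp_const_div_div (φ := fun u => u ^ (-s) * U u) hx, mul_comm, mellinT]

lemma ae_norm_comp_const_div_mul_le (hφ : ∀ t > 0, |φ t| ≤ a * t ^ σ + b * t ^ τ) :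
    ∀ᵐ t ∂volume.restrict (Set.Ioi 0), ‖U (x / t) * φ t / t‖ ≤
      a * (|U (x / t)| * t ^ σ / t) + b * (|U (x / t)| * t ^ τ / t) := by
  filter_upwards [ae_restrict_mem measurableSet_Ioi] with t (ht : 0 < t)
  calc ‖U (x / t) * φ t / t‖ = |U (x / t)| * |φ t| / t := by
        rw [Real.norm_eq_abs, abs_div, abs_mul, abs_of_pos ht]
    _ ≤ |U (x / t)| * (a * t ^ σ + b * t ^ τ) / t := by
        gcongr
        exact hφ t ht
    _ = a * (|U (x / t)| * t ^ σ / t) + b * (|U (x / t)| * t ^ τ / t) := by ring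

lemma integrableOn_comp_const_div_mul_of_abs_le (hUσ : MellinIntegrable U σ)
    (hUτ : MellinIntegrable U τ) (hx : 0 < x)
    (hφ_meas : AEStronglyMeasurable φ (volume.restrict (Set.Ioi 0)))
    (hφ : ∀ t > 0, |φ t| ≤ a * t ^ σ + b * t ^ τ) :
    IntegrableOn (fun t => U (x / t) * φ t / t) (Set.Ioi 0) := by
  refine Integrable.mono' (((hUσ.abs.integrableOn_comp_const_div_mul_rpow hx).const_mul a).add
    ((hUτ.abs.integrableOn_comp_const_div_mul_rpow hx).const_mul b)) ?_
    (ae_norm_comp_const_div_mul_le hφ)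
  have hpow : Measurable fun t : ℝ => t ^ (-σ) := measurable_id.pow_const _
  refine ((hUσ.integrableOn_comp_const_div_mul_rpow hx).aestronglyMeasurable.mul
    (hpow.aestronglyMeasurable.mul hφ_meas)).congr ?_
  filter_upwards [ae_restrict_mem measurableSet_Ioi] with t (ht : 0 < t)
  rw [Pi.mul_apply, Pi.mul_apply, Real.rpow_neg ht.le]
  field_simp

lemma abs_mellinConv_le (hUσ : MellinIntegrable U σ) (hUτ : MellinIntegrable U τ) (hx : 0 < x)
    (hφ : ∀ t > 0, |φ t| ≤ a * t ^ σ + b * t ^ τ) :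
    |mellinConv U φ x| ≤
      a * (mellinT (fun t => |U t|) σ * x ^ σ) + b * (mellinT (fun t => |U t|) τ * x ^ τ) := by
  have hintσ := (hUσ.abs.integrableOn_comp_const_div_mul_rpow hx).const_mul a
  have hintτ := (hUτ.abs.integrableOn_comp_const_div_mul_rpow hx).const_mul b
  refine (norm_integral_le_of_norm_le (hintσ.add hintτ)
    (ae_norm_comp_const_div_mul_le hφ)).trans_eq ?_
  rw [← mellinConv_rpow hx, ← mellinConv_rpow hx, mellinConv, mellinConv, ← integral_const_mul,
    ← integral_const_mul]
  exact integral_add hintσ hintτ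

theorem abs_mellinConv_sub_mellinT_mul_le {f : ℝ → ℝ} {A c : ℝ} (hUσ : MellinIntegrable U σ)
    (hUτ : MellinIntegrable U τ) (hs : s ∈ Set.Icc σ τ) (hx : 0 < x)
    (hf_meas : AEStronglyMeasurable f (volume.restrict (Set.Ioi 0)))
    (hf : ∀ t > 0, |f t - t ^ s * c| ≤ A * ((t / x) ^ σ + (t / x) ^ τ)) :
    |mellinConv U f x - mellinT U s * (x ^ s * c)| ≤
      A * (mellinT (fun t => |U t|) σ + mellinT (fun t => |U t|) τ) := by
  have hbound : ∀ t > 0, |f t - t ^ s * c| ≤ A / x ^ σ * t ^ σ + A / x ^ τ * t ^ τ := by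
    intro t ht
    refine (hf t ht).trans_eq ?_
    rw [Real.div_rpow ht.le hx.le, Real.div_rpow ht.le hx.le]
    ring
  have hpow_meas : Measurable fun t : ℝ => t ^ s * c := (measurable_id.pow_const s).mul_const c
  have hint_sub := integrableOn_comp_const_div_mul_of_abs_le hUσ hUτ hx
    (hf_meas.sub hpow_meas.aestronglyMeasurable) hbound
  have hint_pow := ((hUσ.of_mem_Icc hUτ hs).integrableOn_comp_const_div_mul_rpow hx).const_mul c
  have hsplit : mellinConv U f x =
      mellinConv U (fun t => f t - t ^ s * c) x + c * mellinConv U (fun t => t ^ s) x := by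
    simp only [mellinConv]
    rw [← integral_const_mul]
    refine Eq.trans ?_ (integral_add hint_sub hint_pow)
    congr with t
    ring
  calc |mellinConv U f x - mellinT U s * (x ^ s * c)|
      = |mellinConv U (fun t => f t - t ^ s * c) x| := by
        rw [hsplit, mellinConv_rpow hx]
        congr 1
        ring
    _ ≤ _ := abs_mellinConv_le hUσ hUτ hx hbound
    _ = A * (mellinT (fun t => |U t|) σ + mellinT (fun t => |U t|) τ) := by
        field_simp

end Mellin

theorem mellin_convolution_asymptotics_at_infinity_general {U f l g h : ℝ → ℝ} {σ τ ρ : ℝ}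
    (hρ : ρ ∈ Set.Ioo σ τ) (hUσ : MellinIntegrable U σ) (hUτ : MellinIntegrable U τ)
    (hf_meas : AEStronglyMeasurable f (volume.restrict (Set.Ioi 0)))
    (hl : IsSlowlyVaryingWithRemainder l g) (hg : IsSlowlyVarying g) (hh : IsZygmund h)
    (hf_asymp : (fun x => f x - x ^ ρ * l x) =O[atTop] fun x => x ^ ρ * l x * h x)
    (hf_bdd : ∀ a : ℝ, 0 < a → ∃ M, ∀ x ∈ Set.Ioc 0 a, |x ^ (-σ) * f x| ≤ M) :
    (fun x => mellinConv U f x - mellinT U ρ * (x ^ ρ * l x)) =O[atTop]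
      fun x => x ^ ρ * l x * (g x + h x) := by
  obtain ⟨C, hC⟩ := exists_eventually_forall_abs_sub_rpow_mul_le hρ hl hg hh hf_asymp hf_bdd
  refine IsBigO.of_bound (C * (mellinT (fun t => |U t|) σ + mellinT (fun t => |U t|) τ)) ?_
  filter_upwards [hC, eventually_gt_atTop 0] with x hx hx0
  have hlx := hl.nonneg x
  have hgx := hg.nonneg x
  have hhx := hh.nonneg x
  rw [Real.norm_of_nonneg (by positivity : 0 ≤ x ^ ρ * l x * (g x + h x)), mul_right_comm]
  exact abs_mellinConv_sub_mellinT_mul_le hUσ hUτ (Set.Ioo_subset_Icc_self hρ) hx0 hf_meas hx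

/-- generalization of Arandelović's theorem with an error estimate,
behavior at infinity.  If the Mellin transform of a nonnegative measurable `U`
converges absolutely in the strip `σ ≤ Re z ≤ τ`, `f(x) = x^ρ l(x)(1 + O(h(x)))` as
`x → ∞` with `ρ ∈ (σ,τ)`, `l` slowly varying with remainder `g`, `g` slowly varying,
`h` in the Zygmund class, `g, h → 0`, `g`, `1/l`, `1/g` locally bounded on `(x₀,∞)`,
and `x ↦ x^{−σ} f(x)` bounded on every `(0,a]`, then
`U ⋆_M f(x) = MU(ρ) x^ρ l(x) (1 + O(g(x)) + O(h(x)))` as `x → ∞`. -/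
theorem mellin_convolution_asymptotics_at_infinity
    (U f l g h : ℝ → ℝ) (σ τ ρ x₀ : ℝ)
    (hστ : σ < τ) (hρ : ρ ∈ Set.Ioo σ τ) (hx₀ : 0 < x₀)
    (hU_meas : Measurable U) (hU_nonneg : ∀ x, 0 ≤ U x)
    (hf_meas : Measurable f)
    (hl_meas : Measurable l) (hl_nonneg : ∀ x, 0 ≤ l x)
    (hg_meas : Measurable g) (hg_nonneg : ∀ x, 0 ≤ g x)
    (hh_meas : Measurable h) (hh_nonneg : ∀ x, 0 ≤ h x)
    -- absolute convergence of the Mellin transform of `U` in the strip `σ ≤ Re z ≤ τ`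
    (hMellin : ∀ s ∈ Set.Icc σ τ,
      MeasureTheory.IntegrableOn (fun t => t ^ (-s) * U t / t) (Set.Ioi 0))
    -- `g` is slowly varying and `g(x) → 0`
    (hg_slow : ∀ lam : ℝ, 0 < lam →
      Tendsto (fun x => g (lam * x) / g x) atTop (nhds 1))
    (hg_zero : Tendsto g atTop (nhds 0))
    -- `l` is slowly varying with remainder `g`
    (hl_rem : ∀ lam : ℝ, 1 < lam →
      (fun x => l (lam * x) / l x - 1) =O[atTop] g)
    -- `h` belongs to the Zygmund class and `h(x) → 0`
    (hh_zyg : ∀ α : ℝ, 0 < α →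
      (∃ x₁ : ℝ, 0 < x₁ ∧ MonotoneOn (fun x => x ^ α * h x) (Set.Ici x₁)) ∧
      (∃ x₁ : ℝ, 0 < x₁ ∧ AntitoneOn (fun x => x ^ (-α) * h x) (Set.Ici x₁)))
    (hh_zero : Tendsto h atTop (nhds 0))
    -- condition (1): `f(x) = x^ρ l(x)(1 + O(h(x)))` as `x → ∞`
    (hf_asymp : (fun x => f x - x ^ ρ * l x) =O[atTop] (fun x => x ^ ρ * l x * h x))
    -- condition (2): `g`, `1/l`, `1/g` are locally bounded on `(x₀,∞)`
    (hloc : ∀ K : Set ℝ, IsCompact K → K ⊆ Set.Ioi x₀ →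
      ∃ M : ℝ, ∀ x ∈ K, g x ≤ M ∧ (l x)⁻¹ ≤ M ∧ (g x)⁻¹ ≤ M)
    -- condition (3): `x ↦ x^{−σ} f(x)` is bounded on every `(0,a]`
    (hf_bdd : ∀ a : ℝ, 0 < a → ∃ M : ℝ, ∀ x ∈ Set.Ioc (0:ℝ) a, |x ^ (-σ) * f x| ≤ M) :
    (fun x => mellinConv U f x - mellinT U ρ * (x ^ ρ * l x)) =O[atTop]
      (fun x => x ^ ρ * l x * (g x + h x)) :=
  mellin_convolution_asymptotics_at_infinity_general hρ
    (hMellin σ (Set.left_mem_Icc.2 hστ.le)) (hMellin τ (Set.right_mem_Icc.2 hστ.le))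
    hf_meas.aestronglyMeasurable ⟨hl_meas, hl_nonneg, hg_zero, hl_rem⟩
    ⟨hg_meas, hg_nonneg, fun c hc => hg_slow c (zero_lt_one.trans hc)⟩
    ⟨hh_nonneg, fun α hα => (hh_zyg α hα).1.imp fun _ => And.right,
      fun α hα => (hh_zyg α hα).2.imp fun _ => And.right⟩
    hf_asymp hf_bdd
end

section
/- Let t > 0, λ > 0, η₁ > 1, η₂ > 0, and p, q > 0 with p + q = 1, and set s = 2√π·C₁ and r = 2√B₁ with C₁ = (η₁λtp/(2π))·exp{η₂λtq/(η₁+η₂) − λt} and B₁ = η₁λtp. Then there exists a positive constant c such that |G₁(t,u) − u^{−3/2}·D^{−3/2}λ_{s,r}(u)| ≤ c·u^{−5/2}·D^{−5/2}λ_{s,r}(u) for all u > 0, where λ_{s,r}(u) = s·cosh(r√u) and D^α denotes the Riemann–Liouville fractional integral D^α f(u) = (1/Γ(−α))·∫_0^u f(y)(u−y)^{−α−1} dy for α < 0. -/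
/-!
Write `B = η₁λtp` and `E = exp (η₂λtq/(η₁+η₂) - λt)`. Integrating the series of `cosh` term by
term, the beta integral and the duplication formula give
`u^{-β} D^{-β}λ_{s,r}(u) = Σ_k B^{k+1} E u^k / (Γ(k+1/2) Γ(k+1+β))`.
On the other side, thinning the Poisson weights splits `π_n P_{n,k+1}` into a sum over `i ≥ k+1` of
products of Poisson weights with means `λtp` and `λtq`. The terms with `i = k+1` contribute exactly
`B^{k+1} E / (Γ(k+1) Γ(k+2))` to `a_k`; for `i > k+1` the factorial `i!` is at least
`(k+2)! (i-k-1)!`, so all the other terms contribute at most a multiple of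
`B^{k+1} / (Γ(k+1) Γ(k+3))`. By log-convexity of `Γ`, the numbers `1 / (Γ(k+1) Γ(k+2))` and
`1 / (Γ(k+1/2) Γ(k+5/2))` differ by at most a multiple of `1 / (Γ(k+1/2) Γ(k+7/2))`, which also
dominates `1 / (Γ(k+1) Γ(k+3))`; it remains to compare the two power series coefficientwise.
-/

open Filter Asymptotics MeasureTheory

/-- `P_{n,k}` from Kou's double exponential jump model: `P_{n,n} = p^n` and, for
`1 ≤ k ≤ n−1`,
`P_{n,k} = Σ_{i=k}^{n−1} C(n−k−1, i−k) C(n,i) (η₁/(η₁+η₂))^{i−k} (η₂/(η₁+η₂))^{n−i} p^i q^{n−i}`. -/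
noncomputable def Pcoef (η₁ η₂ p q : ℝ) (n k : ℕ) : ℝ :=
  if k = n then p ^ n
  else ∑ i ∈ Finset.Ico k n,
    ((n - k - 1).choose (i - k) : ℝ) * (n.choose i : ℝ) *
      (η₁ / (η₁ + η₂)) ^ (i - k) * (η₂ / (η₁ + η₂)) ^ (n - i) * p ^ i * q ^ (n - i)

/-- `Q_{n,k}` from Kou's double exponential jump model: `Q_{n,n} = q^n` and, for
`1 ≤ k ≤ n−1`,
`Q_{n,k} = Σ_{i=k}^{n−1} C(n−k−1, i−k) C(n,i) (η₁/(η₁+η₂))^{n−i} (η₂/(η₁+η₂))^{i−k} p^{n−i} q^i`. -/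
noncomputable def Qcoef (η₁ η₂ p q : ℝ) (n k : ℕ) : ℝ :=
  if k = n then q ^ n
  else ∑ i ∈ Finset.Ico k n,
    ((n - k - 1).choose (i - k) : ℝ) * (n.choose i : ℝ) *
      (η₁ / (η₁ + η₂)) ^ (n - i) * (η₂ / (η₁ + η₂)) ^ (i - k) * p ^ (n - i) * q ^ i

/-- The Poisson weights `π_n = e^{−λt} (λt)^n / n!`. -/
noncomputable def poisCoef (lam t : ℝ) (n : ℕ) : ℝ :=
  Real.exp (-(lam * t)) * (lam * t) ^ n / (n.factorial : ℝ)

/-- `a_k = (η₁^{k+1}/k!) Σ_{n=k+1}^∞ π_n P_{n,k+1}` (the series is reindexed by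
`n = m + (k+1)`, `m ≥ 0`). -/
noncomputable def aCoef (lam t η₁ η₂ p q : ℝ) (k : ℕ) : ℝ :=
  η₁ ^ (k + 1) / (k.factorial : ℝ) *
    ∑' m : ℕ, poisCoef lam t (m + (k + 1)) * Pcoef η₁ η₂ p q (m + (k + 1)) (k + 1)

/-- `b_k = (η₂^{k+1}/k!) Σ_{n=k+1}^∞ π_n Q_{n,k+1}` (the series is reindexed by
`n = m + (k+1)`, `m ≥ 0`). -/
noncomputable def bCoef (lam t η₁ η₂ p q : ℝ) (k : ℕ) : ℝ :=
  η₂ ^ (k + 1) / (k.factorial : ℝ) *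
    ∑' m : ℕ, poisCoef lam t (m + (k + 1)) * Qcoef η₁ η₂ p q (m + (k + 1)) (k + 1)

/-- `G₁(t,u) = Σ_{k=0}^∞ a_k u^k`. -/
noncomputable def G1 (lam t η₁ η₂ p q : ℝ) (u : ℝ) : ℝ :=
  ∑' k : ℕ, aCoef lam t η₁ η₂ p q k * u ^ k

/-- `G₂(t,−u) = Σ_{k=0}^∞ b_k u^k`; `G2m lam t η₁ η₂ p q u` stands for `G₂(t,−u)`. -/
noncomputable def G2m (lam t η₁ η₂ p q : ℝ) (u : ℝ) : ℝ :=
  ∑' k : ℕ, bCoef lam t η₁ η₂ p q k * u ^ k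

/-- `H₁(t,x) = G₁(t, log x)` for `x > 1`. -/
noncomputable def H1fun (lam t η₁ η₂ p q : ℝ) (x : ℝ) : ℝ :=
  G1 lam t η₁ η₂ p q (Real.log x)

/-- `H₂(t,x) = G₂(t, log x) = G2m(t, log(1/x))` for `0 < x < 1`. -/
noncomputable def H2fun (lam t η₁ η₂ p q : ℝ) (x : ℝ) : ℝ :=
  G2m lam t η₁ η₂ p q (Real.log x⁻¹)

/-- The density of the absolutely continuous part of the law of the exponential compound
Poisson factor: `H(t,x) = H₁(t,x) x^{−η₁−1}` for `x > 1` and `H(t,x) = H₂(t,x) x^{η₂−1}`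
for `0 < x < 1`. -/
noncomputable def Hfun (lam t η₁ η₂ p q : ℝ) (x : ℝ) : ℝ :=
  if 1 < x then H1fun lam t η₁ η₂ p q x * x ^ (-η₁ - 1)
  else H2fun lam t η₁ η₂ p q x * x ^ (η₂ - 1)

/-- The Riemann–Liouville fractional integral of order `α < 0`:
`D^α f(u) = (1/Γ(−α)) ∫_0^u f(y)(u−y)^{−α−1} dy`. -/
noncomputable def rlInt (α : ℝ) (f : ℝ → ℝ) (u : ℝ) : ℝ :=
  (1 / Real.Gamma (-α)) * ∫ y in (0:ℝ)..u, f y * (u - y) ^ (-α - 1)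

/-- `λ_{s,r}(u) = s cosh(r√u)`. -/
noncomputable def lambdaFun (s r : ℝ) (u : ℝ) : ℝ :=
  s * Real.cosh (r * Real.sqrt u)

open Finset Real
open scoped Nat

section TwoIndexCoefficients

/-- The coefficient of `z ^ k` in Dzherbashyan's two-index Mittag-Leffler function
`Σ z ^ k / (Γ(k + a) Γ(k + b))`. Both `G₁` (up to lower-order terms) and
`u ^ (-β) D ^ (-β) λ_{s,r}(u)` are series in these coefficients, with `(a, b) = (1, 2)` and
`(a, b) = (1/2, 1 + β)` respectively. -/
noncomputable def gammaCoef (a b : ℝ) (k : ℕ) : ℝ :=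
  (Gamma (k + a) * Gamma (k + b))⁻¹

lemma gammaCoef_comm (a b : ℝ) (k : ℕ) : gammaCoef a b k = gammaCoef b a k := by
  rw [gammaCoef, gammaCoef, mul_comm]

lemma gammaCoef_nonneg {a b : ℝ} (ha : 0 ≤ a) (hb : 0 ≤ b) (k : ℕ) : 0 ≤ gammaCoef a b k := by
  have := Gamma_nonneg_of_nonneg (add_nonneg k.cast_nonneg ha)
  have := Gamma_nonneg_of_nonneg (add_nonneg k.cast_nonneg hb)
  unfold gammaCoef
  positivity

lemma gammaCoef_eq_add_mul_gammaCoef_add_one (a b : ℝ) (k : ℕ) :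
    gammaCoef a b k = (k + b) * gammaCoef a (b + 1) k := by
  unfold gammaCoef
  rw [← add_assoc]
  rcases eq_or_ne (k + b) 0 with h | h
  · simp [h, Gamma_zero]
  · rw [Gamma_add_one h]
    field_simp

lemma gammaCoef_one_natCast_add_one (j k : ℕ) :
    gammaCoef 1 (j + 1) k = ((k ! : ℝ) * (k + j)!)⁻¹ := by
  rw [gammaCoef, Gamma_nat_eq_factorial, ← add_assoc, ← Nat.cast_add, Gamma_nat_eq_factorial]

lemma Gamma_add_mul_Gamma_add_le {x a b : ℝ} (hx : 0 < x) (ha : 0 ≤ a) (hb : 0 ≤ b) :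
    Gamma (x + a) * Gamma (x + b) ≤ Gamma x * Gamma (x + a + b) := by
  rcases ha.eq_or_lt with rfl | ha
  · simp
  have hΓ {y : ℝ} (hy : 0 < y) : Gamma y ≠ 0 := (Gamma_pos_of_pos hy).ne'
  have hy : 0 < x + a + b := by positivity
  have hab : b / (a + b) + a / (a + b) = 1 := by field_simp; ring
  have hconv {v w : ℝ} (hv : 0 ≤ v) (hw : 0 ≤ w) (hvw : v + w = 1) :
      log (Gamma (v * x + w * (x + a + b))) ≤ v * log (Gamma x) + w * log (Gamma (x + a + b)) :=
    convexOn_log_Gamma.2 hx hy hv hw hvw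
  have h₁ := hconv (by positivity) (by positivity) hab
  have h₂ := hconv (by positivity) (by positivity) ((add_comm _ _).trans hab)
  rw [show b / (a + b) * x + a / (a + b) * (x + a + b) = x + a by field_simp; ring] at h₁
  rw [show a / (a + b) * x + b / (a + b) * (x + a + b) = x + b by field_simp; ring] at h₂
  have := Gamma_pos_of_pos hx
  have := Gamma_pos_of_pos hy
  rw [← log_le_log_iff (mul_pos (Gamma_pos_of_pos (by positivity))
    (Gamma_pos_of_pos (by positivity))) (by positivity), log_mul (hΓ (by positivity))
    (hΓ (by positivity)), log_mul (hΓ hx) (hΓ hy)]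
  linear_combination h₁ + h₂ + (log (Gamma x) + log (Gamma (x + a + b))) * hab

lemma gammaCoef_le_gammaCoef_add {x a b : ℝ} (hx : 0 < x) (ha : 0 ≤ a) (hb : 0 ≤ b) (k : ℕ) :
    gammaCoef x (x + a + b) k ≤ gammaCoef (x + a) (x + b) k := by
  have h := Gamma_add_mul_Gamma_add_le (x := k + x) (by positivity) ha hb
  unfold gammaCoef
  simp only [add_assoc] at h ⊢
  exact inv_anti₀ (mul_pos (Gamma_pos_of_pos (by positivity)) (Gamma_pos_of_pos (by positivity))) h

lemma gammaCoef_half_five_halves_le (k : ℕ) : gammaCoef (1 / 2) (5 / 2) k ≤ gammaCoef 1 2 k := by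
  have := gammaCoef_le_gammaCoef_add (x := 1 / 2) (a := 1 / 2) (b := 3 / 2)
    (by norm_num) (by norm_num) (by norm_num) k
  norm_num at this ⊢
  exact this

lemma add_half_mul_gammaCoef_one_two_le (k : ℕ) :
    (k + 1 / 2) * gammaCoef 1 2 k ≤ (k + 3 / 2) * gammaCoef (1 / 2) (5 / 2) k := by
  have hconv : gammaCoef 1 2 k ≤ gammaCoef (3 / 2) (3 / 2) k := by
    have := gammaCoef_le_gammaCoef_add (x := 1) (a := 1 / 2) (b := 1 / 2)
      (by norm_num) (by norm_num) (by norm_num) k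
    norm_num at this ⊢
    exact this
  calc (k + 1 / 2) * gammaCoef 1 2 k
      ≤ (k + 1 / 2) * gammaCoef (3 / 2) (1 / 2 + 1) k := by norm_num; gcongr
    _ = gammaCoef (1 / 2) (3 / 2) k := by
        rw [← gammaCoef_eq_add_mul_gammaCoef_add_one, gammaCoef_comm]
    _ = (k + 3 / 2) * gammaCoef (1 / 2) (5 / 2) k := by
        rw [gammaCoef_eq_add_mul_gammaCoef_add_one]; norm_num

lemma gammaCoef_half_five_halves_eq (k : ℕ) :
    gammaCoef (1 / 2) (5 / 2) k = (k + 5 / 2) * gammaCoef (1 / 2) (7 / 2) k := by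
  rw [gammaCoef_eq_add_mul_gammaCoef_add_one]; norm_num

lemma gammaCoef_one_two_sub_le (k : ℕ) :
    gammaCoef 1 2 k - gammaCoef (1 / 2) (5 / 2) k ≤ 5 * gammaCoef (1 / 2) (7 / 2) k := by
  have hZ : 0 ≤ gammaCoef (1 / 2) (7 / 2) k := gammaCoef_nonneg (by norm_num) (by norm_num) k
  refine le_of_mul_le_mul_left ?_ (show 0 < (k : ℝ) + 1 / 2 by positivity)
  calc (k + 1 / 2) * (gammaCoef 1 2 k - gammaCoef (1 / 2) (5 / 2) k)
      ≤ gammaCoef (1 / 2) (5 / 2) k := by linarith [add_half_mul_gammaCoef_one_two_le k]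
    _ = (k + 5 / 2) * gammaCoef (1 / 2) (7 / 2) k := gammaCoef_half_five_halves_eq k
    _ ≤ (5 * (k + 1 / 2)) * gammaCoef (1 / 2) (7 / 2) k := by
        gcongr; linarith [k.cast_nonneg (α := ℝ)]
    _ = (k + 1 / 2) * (5 * gammaCoef (1 / 2) (7 / 2) k) := by ring

lemma gammaCoef_one_three_le (k : ℕ) : gammaCoef 1 3 k ≤ 4 * gammaCoef (1 / 2) (7 / 2) k := by
  have hZ : 0 ≤ gammaCoef (1 / 2) (7 / 2) k := gammaCoef_nonneg (by norm_num) (by norm_num) k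
  have hrec : gammaCoef 1 2 k = (k + 2) * gammaCoef 1 3 k := by
    rw [gammaCoef_eq_add_mul_gammaCoef_add_one]; norm_num
  refine le_of_mul_le_mul_left ?_ (show 0 < ((k : ℝ) + 1 / 2) * (k + 2) by positivity)
  calc (k + 1 / 2) * (k + 2) * gammaCoef 1 3 k
      = (k + 1 / 2) * gammaCoef 1 2 k := by rw [hrec]; ring
    _ ≤ (k + 3 / 2) * gammaCoef (1 / 2) (5 / 2) k := add_half_mul_gammaCoef_one_two_le k
    _ = (k + 3 / 2) * (k + 5 / 2) * gammaCoef (1 / 2) (7 / 2) k := by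
        rw [gammaCoef_half_five_halves_eq]; ring
    _ ≤ (4 * ((k + 1 / 2) * (k + 2))) * gammaCoef (1 / 2) (7 / 2) k := by
        refine mul_le_mul_of_nonneg_right ?_ hZ
        nlinarith [k.cast_nonneg (α := ℝ)]
    _ = (k + 1 / 2) * (k + 2) * (4 * gammaCoef (1 / 2) (7 / 2) k) := by ring

end TwoIndexCoefficients

section RiemannLiouville

variable {β u : ℝ}

lemma integral_rpow_mul_sub_rpow {α : ℝ} (hα : 0 < α) (hβ : 0 < β) (hu : 0 < u) :
    ∫ y in (0 : ℝ)..u, y ^ (α - 1) * (u - y) ^ (β - 1) =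
      u ^ (α + β - 1) * (Gamma α * Gamma β / Gamma (α + β)) := by
  have h := Complex.betaIntegral_scaled α β hu
  rw [Complex.betaIntegral_eq_Gamma_mul_div _ _ (by simpa) (by simpa), ← Complex.ofReal_add,
    Complex.Gamma_ofReal, Complex.Gamma_ofReal, Complex.Gamma_ofReal] at h
  apply Complex.ofReal_injective
  rw [← intervalIntegral.integral_ofReal]
  push_cast [Complex.ofReal_cpow hu.le] at h ⊢
  rw [← h]
  refine intervalIntegral.integral_congr fun y hy => ?_
  rw [Set.uIcc_of_le hu.le] at hy
  simp [Complex.ofReal_cpow hy.1, Complex.ofReal_cpow (sub_nonneg.2 hy.2)]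

lemma intervalIntegrable_sub_rpow (hβ : 0 < β) (u : ℝ) :
    IntervalIntegrable (fun y => (u - y) ^ (β - 1)) volume 0 u := by
  simpa using ((intervalIntegral.intervalIntegrable_rpow' (a := 0) (b := u) (r := β - 1)
    (by linarith)).comp_sub_left u).symm

lemma rlInt_pow (hβ : 0 < β) (hu : 0 < u) (k : ℕ) :
    rlInt (-β) (fun y => y ^ k) u = u ^ β * (k ! / Gamma (k + 1 + β) * u ^ k) := by
  have hΓ : Gamma β ≠ 0 := (Gamma_pos_of_pos hβ).ne'
  have h := integral_rpow_mul_sub_rpow (α := k + 1) (by positivity) hβ hu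
  rw [show (k : ℝ) + 1 + β - 1 = β + k by ring, rpow_add hu, Gamma_nat_eq_factorial] at h
  simp only [add_sub_cancel_right, rpow_natCast] at h
  rw [rlInt, neg_neg, h]
  field_simp

lemma hasSum_rpow_neg_mul_rlInt {c : ℕ → ℝ} {f : ℝ → ℝ} (hβ : 0 < β) (hu : 0 < u)
    (hf : ∀ y ∈ Set.Ioc 0 u, HasSum (fun k => c k * y ^ k) (f y)) :
    HasSum (fun k => c k * (k ! / Gamma (k + 1 + β)) * u ^ k) (u ^ (-β) * rlInt (-β) f u) := by
  have hsum : Summable fun k => |c k * u ^ k| := (hf u ⟨hu, le_rfl⟩).summable.abs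
  have hint : HasSum (fun k => ∫ y in (0 : ℝ)..u, c k * y ^ k * (u - y) ^ (β - 1))
      (∫ y in (0 : ℝ)..u, f y * (u - y) ^ (β - 1)) := by
    refine intervalIntegral.hasSum_integral_of_dominated_convergence
      (fun k y => |c k * u ^ k| * (u - y) ^ (β - 1)) (fun k => ?_) (fun k => ?_) ?_ ?_ ?_
    · fun_prop
    · refine .of_forall fun y hy => ?_
      rw [Set.uIoc_of_le hu.le] at hy
      have hy0 : 0 ≤ y := hy.1.le
      have huy : 0 ≤ (u - y) ^ (β - 1) := rpow_nonneg (sub_nonneg.2 hy.2) _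
      rw [norm_mul, norm_of_nonneg huy, norm_eq_abs, abs_mul, abs_mul,
        abs_of_nonneg (pow_nonneg hy0 k), abs_of_pos (pow_pos hu k)]
      gcongr
      exact hy.2
    · exact .of_forall fun y _ => hsum.mul_right _
    · simp only [tsum_mul_right]
      exact (intervalIntegrable_sub_rpow hβ u).const_mul _
    · refine .of_forall fun y hy => ?_
      rw [Set.uIoc_of_le hu.le] at hy
      exact (hf y hy).mul_right _
  have hterm (k : ℕ) : 1 / Gamma β * ∫ y in (0 : ℝ)..u, c k * y ^ k * (u - y) ^ (β - 1) =
      c k * (u ^ β * (k ! / Gamma (k + 1 + β) * u ^ k)) := by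
    rw [← rlInt_pow hβ hu, rlInt, neg_neg]
    simp only [mul_assoc, intervalIntegral.integral_const_mul]
    ring
  rw [rlInt, neg_neg]
  refine ((hint.mul_left (1 / Gamma β)).mul_left (u ^ (-β))).congr_fun fun k => ?_
  rw [hterm, rpow_neg hu.le]
  field_simp

lemma factorial_mul_Gamma_add_half (k : ℕ) :
    k ! * Gamma (k + 1 / 2) = (2 * k)! * √π / 4 ^ k := by
  have h := Gamma_mul_Gamma_add_half (k + 1 / 2)
  have hpow : (2 : ℝ) ^ (1 - 2 * ((k : ℝ) + 1 / 2)) = (4 ^ k)⁻¹ := by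
    rw [show 1 - 2 * ((k : ℝ) + 1 / 2) = -((2 * k : ℕ) : ℝ) by push_cast; ring,
      rpow_neg zero_le_two, rpow_natCast, pow_mul]
    norm_num
  rw [hpow, show (k : ℝ) + 1 / 2 + 1 / 2 = k + 1 by ring,
    show 2 * ((k : ℝ) + 1 / 2) = (2 * k : ℕ) + 1 by push_cast; ring, Gamma_nat_eq_factorial,
    Gamma_nat_eq_factorial] at h
  rw [mul_comm, h]
  ring

lemma hasSum_lambdaFun (s r : ℝ) {u : ℝ} (hu : 0 ≤ u) :
    HasSum (fun k : ℕ => s * (r ^ (2 * k) / (2 * k)!) * u ^ k) (lambdaFun s r u) := by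
  refine ((hasSum_cosh (r * √u)).mul_left s).congr_fun fun k => ?_
  rw [mul_pow, pow_mul √u, sq_sqrt hu]
  ring

lemma hasSum_rpow_neg_mul_rlInt_lambdaFun (s r : ℝ) (hβ : 0 < β) (hu : 0 < u) :
    HasSum (fun k : ℕ => s * √π * (r / 2) ^ (2 * k) * gammaCoef (1 / 2) (1 + β) k * u ^ k)
      (u ^ (-β) * rlInt (-β) (lambdaFun s r) u) := by
  refine (hasSum_rpow_neg_mul_rlInt hβ hu fun y hy => hasSum_lambdaFun s r hy.1.le).congr_fun
    fun k => ?_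
  have hfac : (k ! : ℝ) = (2 * k)! * √π / 4 ^ k / Gamma (k + 1 / 2) := by
    rw [← factorial_mul_Gamma_add_half,
      mul_div_cancel_right₀ _ (Gamma_pos_of_pos (by positivity)).ne']
  rw [hfac, div_pow, pow_mul 2, gammaCoef, ← add_assoc, show (2 : ℝ) ^ 2 = 4 by norm_num]
  field_simp

end RiemannLiouville

section PoissonThinning

lemma choose_mul_pow_mul_pow_le {x y : ℝ} (hx : 0 ≤ x) (hy : 0 ≤ y) (i j : ℕ) :
    (i + j).choose i * x ^ i * y ^ j ≤ (x + y) ^ (i + j) := by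
  rw [(Commute.all x y).add_pow']
  refine le_trans (le_of_eq ?_) (single_le_sum
    (f := fun a : ℕ × ℕ => (i + j).choose a.1 • (x ^ a.1 * y ^ a.2)) (fun a _ => by positivity)
    (mem_antidiagonal.2 (rfl : (i, j).1 + (i, j).2 = i + j)))
  simp [mul_assoc]

lemma sum_antidiagonal_pow_div_factorial (x y : ℝ) (m : ℕ) :
    ∑ a ∈ antidiagonal m, x ^ a.1 / a.1 ! * (y ^ a.2 / a.2 !) = (x + y) ^ m / m ! := by
  rw [(Commute.all x y).add_pow', sum_div]
  refine sum_congr rfl fun a ha => ?_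
  rw [← mem_antidiagonal.1 ha, nsmul_eq_mul, Nat.cast_add_choose]
  field_simp

lemma factorial_add_one_mul_factorial_le (K : ℕ) {i : ℕ} (hi : i ≠ 0) :
    (K + 1)! * i ! ≤ (K + i)! := by
  induction i, Nat.one_le_iff_ne_zero.2 hi using Nat.le_induction with
  | base => simp
  | succ n hn ih =>
    calc (K + 1)! * (n + 1)! = (n + 1) * ((K + 1)! * n !) := by rw [Nat.factorial_succ n]; ring
      _ ≤ (K + n + 1) * (K + n)! := Nat.mul_le_mul (by lia) (ih (by lia))
      _ = (K + (n + 1))! := (Nat.factorial_succ _).symm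

variable {lam t η₁ η₂ p q : ℝ}

lemma poisCoef_add_mul_choose (lam t p q : ℝ) (i j : ℕ) :
    poisCoef lam t (i + j) * ((i + j).choose i * p ^ i * q ^ j) =
      exp (-(lam * t)) * ((lam * t * p) ^ i / i ! * ((lam * t * q) ^ j / j !)) := by
  rw [poisCoef, Nat.cast_add_choose]
  field_simp
  ring

/- The truncated subtraction in `(m - 1).choose a.1` makes the extra term `a = (m, 0)` right: it
vanishes for `0 < m` and is `p ^ K`, the value of `P_{K,K}`, for `m = 0`. -/
lemma Pcoef_add_right (η₁ η₂ p q : ℝ) (m K : ℕ) :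
    Pcoef η₁ η₂ p q (m + K) K = ∑ a ∈ antidiagonal m,
      (m - 1).choose a.1 * (η₁ / (η₁ + η₂)) ^ a.1 * (η₂ / (η₁ + η₂)) ^ a.2 *
        ((m + K).choose (K + a.1) * p ^ (K + a.1) * q ^ a.2) := by
  rcases m with - | l
  · simp [Pcoef]
  rw [Pcoef, if_neg (by lia), sum_Ico_eq_sum_range, Nat.sum_antidiagonal_eq_sum_range_succ_mk,
    Nat.add_sub_cancel, sum_range_succ _ (l + 1)]
  simp only [Nat.add_sub_cancel, Nat.choose_succ_self, Nat.cast_zero, zero_mul, add_zero]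
  refine sum_congr rfl fun j _ => ?_
  rw [Nat.add_sub_cancel_left, show l + 1 + K - (K + j) = l + 1 - j by lia]
  ring

lemma poisCoef_mul_Pcoef (lam t η₁ η₂ p q : ℝ) (m K : ℕ) :
    poisCoef lam t (m + K) * Pcoef η₁ η₂ p q (m + K) K = ∑ a ∈ antidiagonal m,
      (m - 1).choose a.1 * (η₁ / (η₁ + η₂)) ^ a.1 * (η₂ / (η₁ + η₂)) ^ a.2 *
        (exp (-(lam * t)) *
          ((lam * t * p) ^ (K + a.1) / (K + a.1)! * ((lam * t * q) ^ a.2 / a.2 !))) := by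
  rw [Pcoef_add_right, mul_sum]
  refine sum_congr rfl fun a ha => ?_
  rw [← poisCoef_add_mul_choose, add_assoc K, mem_antidiagonal.1 ha, add_comm K m]
  ring

lemma choose_pred_mul_pow_mul_pow_le_one (hη₁ : 0 < η₁) (hη₂ : 0 ≤ η₂) {m : ℕ} {a : ℕ × ℕ}
    (ha : a ∈ antidiagonal m) :
    (m - 1).choose a.1 * (η₁ / (η₁ + η₂)) ^ a.1 * (η₂ / (η₁ + η₂)) ^ a.2 ≤ 1 := by
  have hη : η₁ / (η₁ + η₂) + η₂ / (η₁ + η₂) = 1 := by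
    rw [← add_div, div_self (by positivity)]
  calc (m - 1).choose a.1 * (η₁ / (η₁ + η₂)) ^ a.1 * (η₂ / (η₁ + η₂)) ^ a.2
      ≤ m.choose a.1 * (η₁ / (η₁ + η₂)) ^ a.1 * (η₂ / (η₁ + η₂)) ^ a.2 := by
        gcongr
        exact m.sub_le 1
    _ ≤ (η₁ / (η₁ + η₂) + η₂ / (η₁ + η₂)) ^ m := by
        rw [← mem_antidiagonal.1 ha]
        exact choose_mul_pow_mul_pow_le (by positivity) (by positivity) _ _
    _ = 1 := by rw [hη, one_pow]

lemma le_poisCoef_mul_Pcoef (ht : 0 ≤ t) (hlam : 0 ≤ lam) (hη₁ : 0 ≤ η₁) (hη₂ : 0 ≤ η₂)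
    (hp : 0 ≤ p) (hq : 0 ≤ q) (m K : ℕ) :
    exp (-(lam * t)) * ((lam * t * p) ^ K / K !) *
        ((η₂ / (η₁ + η₂) * (lam * t * q)) ^ m / m !) ≤
      poisCoef lam t (m + K) * Pcoef η₁ η₂ p q (m + K) K := by
  rw [poisCoef_mul_Pcoef]
  refine le_trans (le_of_eq ?_) (single_le_sum (fun a _ => by positivity)
    (mem_antidiagonal.2 (zero_add m) : (0, m) ∈ antidiagonal m))
  simp only [Nat.choose_zero_right, Nat.cast_one, pow_zero, add_zero, mul_pow]
  ring

lemma poisCoef_mul_Pcoef_le (ht : 0 ≤ t) (hlam : 0 ≤ lam) (hη₁ : 0 < η₁) (hη₂ : 0 ≤ η₂)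
    (hp : 0 ≤ p) (hq : 0 ≤ q) (m K : ℕ) :
    poisCoef lam t (m + K) * Pcoef η₁ η₂ p q (m + K) K ≤
      exp (-(lam * t)) * ((lam * t * p) ^ K / K !) *
          ((η₂ / (η₁ + η₂) * (lam * t * q)) ^ m / m !) +
        exp (-(lam * t)) * ((lam * t * p) ^ K / (K + 1)!) *
          ((lam * t * p + lam * t * q) ^ m / m !) := by
  have hmem : (0, m) ∈ antidiagonal m := mem_antidiagonal.2 (zero_add m)
  have hterm : ∀ a ∈ (antidiagonal m).erase (0, m),
      (m - 1).choose a.1 * (η₁ / (η₁ + η₂)) ^ a.1 * (η₂ / (η₁ + η₂)) ^ a.2 *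
        (exp (-(lam * t)) *
          ((lam * t * p) ^ (K + a.1) / (K + a.1)! * ((lam * t * q) ^ a.2 / a.2 !))) ≤
      exp (-(lam * t)) * ((lam * t * p) ^ K / (K + 1)!) *
        ((lam * t * p) ^ a.1 / a.1 ! * ((lam * t * q) ^ a.2 / a.2 !)) := by
    intro a ha
    obtain ⟨hne, ha⟩ := mem_erase.1 ha
    have ha₁ : a.1 ≠ 0 := fun h => hne (Prod.ext h (by simpa [h] using mem_antidiagonal.1 ha))
    have hfac : ((K + 1)! : ℝ) * a.1 ! ≤ (K + a.1)! :=
      mod_cast factorial_add_one_mul_factorial_le K ha₁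
    calc _ ≤ 1 * (exp (-(lam * t)) * ((lam * t * p) ^ (K + a.1) / ((K + 1)! * a.1 !) *
          ((lam * t * q) ^ a.2 / a.2 !))) := by
          gcongr
          exact choose_pred_mul_pow_mul_pow_le_one hη₁ hη₂ ha
      _ = _ := by
          rw [pow_add]
          field_simp
  rw [poisCoef_mul_Pcoef, ← add_sum_erase _ _ hmem]
  refine add_le_add (le_of_eq ?_) ?_
  · simp only [Nat.choose_zero_right, Nat.cast_one, pow_zero, add_zero, mul_pow]
    ring
  rw [← sum_antidiagonal_pow_div_factorial, mul_sum]
  exact (sum_le_sum hterm).trans (sum_le_sum_of_subset_of_nonneg (erase_subset _ _)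
    fun a _ _ => by positivity)

lemma hasSum_pow_div_factorial (x : ℝ) : HasSum (fun m : ℕ => x ^ m / m !) (exp x) := by
  rw [exp_eq_exp_ℝ]
  exact NormedSpace.expSeries_div_hasSum_exp x

lemma summable_poisCoef_mul_Pcoef (ht : 0 ≤ t) (hlam : 0 ≤ lam) (hη₁ : 0 < η₁) (hη₂ : 0 ≤ η₂)
    (hp : 0 ≤ p) (hq : 0 ≤ q) (K : ℕ) :
    Summable fun m => poisCoef lam t (m + K) * Pcoef η₁ η₂ p q (m + K) K :=
  .of_nonneg_of_le
    (fun m => le_trans (by positivity) (le_poisCoef_mul_Pcoef ht hlam hη₁.le hη₂ hp hq m K))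
    (fun m => poisCoef_mul_Pcoef_le ht hlam hη₁ hη₂ hp hq m K)
    (((hasSum_pow_div_factorial _).summable.mul_left _).add
      ((hasSum_pow_div_factorial _).summable.mul_left _))

lemma aCoef_sub_mem_Icc (ht : 0 ≤ t) (hlam : 0 ≤ lam) (hη₁ : 0 < η₁) (hη₂ : 0 ≤ η₂)
    (hp : 0 ≤ p) (hq : 0 ≤ q) (k : ℕ) :
    aCoef lam t η₁ η₂ p q k - (η₁ * lam * t * p) ^ (k + 1) *
        exp (η₂ * lam * t * q / (η₁ + η₂) - lam * t) * gammaCoef 1 2 k ∈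
      Set.Icc 0 ((η₁ * lam * t * p) ^ (k + 1) * exp (lam * t * p + lam * t * q - lam * t) *
        gammaCoef 1 3 k) := by
  have hsum := (summable_poisCoef_mul_Pcoef ht hlam hη₁ hη₂ hp hq (k + 1)).hasSum
  have hmain := (hasSum_pow_div_factorial (η₂ / (η₁ + η₂) * (lam * t * q))).mul_left
    (exp (-(lam * t)) * ((lam * t * p) ^ (k + 1) / (k + 1)!))
  have hrem := (hasSum_pow_div_factorial (lam * t * p + lam * t * q)).mul_left
    (exp (-(lam * t)) * ((lam * t * p) ^ (k + 1) / (k + 2)!))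
  have hlower := hasSum_le
    (fun m => le_poisCoef_mul_Pcoef ht hlam hη₁.le hη₂ hp hq m (k + 1)) hmain hsum
  have hupper := hasSum_le
    (fun m => poisCoef_mul_Pcoef_le ht hlam hη₁ hη₂ hp hq m (k + 1)) hsum (hmain.add hrem)
  have hscale : 0 ≤ η₁ ^ (k + 1) / k ! := by positivity
  have hexp (x : ℝ) : exp (x - lam * t) = exp (-(lam * t)) * exp x := by
    rw [← exp_add, neg_add_eq_sub]
  have hpow : (η₁ * lam * t * p) ^ (k + 1) = η₁ ^ (k + 1) * (lam * t * p) ^ (k + 1) := by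
    rw [← mul_pow]
    ring
  have hgamma₂ : gammaCoef 1 2 k = ((k ! : ℝ) * (k + 1)!)⁻¹ := by
    simpa [one_add_one_eq_two] using gammaCoef_one_natCast_add_one 1 k
  have hgamma₃ : gammaCoef 1 3 k = ((k ! : ℝ) * (k + 2)!)⁻¹ := by
    simpa [two_add_one_eq_three] using gammaCoef_one_natCast_add_one 2 k
  rw [aCoef, hexp, hexp, hpow, hgamma₂, hgamma₃,
    show η₂ * lam * t * q / (η₁ + η₂) = η₂ / (η₁ + η₂) * (lam * t * q) by ring]
  constructor
  · convert! sub_nonneg.2 (mul_le_mul_of_nonneg_left hlower hscale) using 2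
    field_simp
  · convert! mul_le_mul_of_nonneg_left (sub_le_iff_le_add'.2 hupper) hscale using 1
    · field_simp
    · field_simp

lemma abs_aCoef_sub_le (ht : 0 ≤ t) (hlam : 0 ≤ lam) (hη₁ : 0 < η₁) (hη₂ : 0 ≤ η₂)
    (hp : 0 ≤ p) (hq : 0 ≤ q) (k : ℕ) :
    |aCoef lam t η₁ η₂ p q k - (η₁ * lam * t * p) ^ (k + 1) *
        exp (η₂ * lam * t * q / (η₁ + η₂) - lam * t) * gammaCoef (1 / 2) (5 / 2) k| ≤
      (η₁ * lam * t * p) ^ (k + 1) * (5 * exp (η₂ * lam * t * q / (η₁ + η₂) - lam * t) +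
        4 * exp (lam * t * p + lam * t * q - lam * t)) * gammaCoef (1 / 2) (7 / 2) k := by
  obtain ⟨hlower, hupper⟩ := aCoef_sub_mem_Icc ht hlam hη₁ hη₂ hp hq k
  set M := (η₁ * lam * t * p) ^ (k + 1) * exp (η₂ * lam * t * q / (η₁ + η₂) - lam * t) with hM
  set R := (η₁ * lam * t * p) ^ (k + 1) * exp (lam * t * p + lam * t * q - lam * t) with hR
  have hM0 : 0 ≤ M := by positivity
  have hR0 : 0 ≤ R := by positivity
  have h₁ := mul_le_mul_of_nonneg_left (gammaCoef_half_five_halves_le k) hM0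
  have h₂ := mul_le_mul_of_nonneg_left (gammaCoef_one_two_sub_le k) hM0
  have h₃ := mul_le_mul_of_nonneg_left (gammaCoef_one_three_le k) hR0
  rw [abs_of_nonneg (by linarith)]
  calc _ ≤ M * (5 * gammaCoef (1 / 2) (7 / 2) k) + R * (4 * gammaCoef (1 / 2) (7 / 2) k) := by
        linarith
    _ = _ := by
        rw [hM, hR]
        ring

end PoissonThinning

lemma abs_tsum_sub_le_of_abs_sub_le {ι : Type*} {f g h : ι → ℝ} {S T : ℝ} (hg : HasSum g S)
    (hh : HasSum h T) (hfgh : ∀ i, |f i - g i| ≤ h i) : |∑' i, f i - S| ≤ T := by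
  have hf : Summable f := by
    simpa using (Summable.of_norm_bounded hh.summable hfgh).add hg.summable
  exact (hf.hasSum.sub hg).norm_le_of_bounded hh hfgh

lemma mul_sqrt_pi_mul_half_pow {s r B E : ℝ} (hB : 0 ≤ B)
    (hs : s = 2 * √π * (B / (2 * π) * E)) (hr : r = 2 * √B) (k : ℕ) :
    s * √π * (r / 2) ^ (2 * k) = B ^ (k + 1) * E := by
  have hsπ : s * √π = B * E := by
    rw [hs, show 2 * √π * (B / (2 * π) * E) * √π = √π ^ 2 * (2 * (B / (2 * π) * E)) by ring,
      sq_sqrt pi_pos.le]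
    field_simp
  rw [hsπ, hr, mul_div_cancel_left₀ _ two_ne_zero, pow_mul, sq_sqrt hB]
  ring

theorem G1_fractional_integral_comparison_general {t lam η₁ η₂ p q : ℝ}
    (ht : 0 ≤ t) (hlam : 0 ≤ lam) (hη₁ : 0 < η₁) (hη₂ : 0 ≤ η₂) (hp : 0 ≤ p) (hq : 0 ≤ q)
    {s r : ℝ}
    (hs : s = 2 * √π *
      (η₁ * lam * t * p / (2 * π) * exp (η₂ * lam * t * q / (η₁ + η₂) - lam * t)))
    (hr : r = 2 * √(η₁ * lam * t * p)) :
    ∃ c : ℝ, 0 < c ∧ ∀ u : ℝ, 0 < u →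
      |G1 lam t η₁ η₂ p q u - u ^ (-(3 : ℝ) / 2) * rlInt (-(3 : ℝ) / 2) (lambdaFun s r) u| ≤
        c * u ^ (-(5 : ℝ) / 2) * rlInt (-(5 : ℝ) / 2) (lambdaFun s r) u := by
  have hcoef := mul_sqrt_pi_mul_half_pow (by positivity) hs hr
  have hbound := abs_aCoef_sub_le ht hlam hη₁ hη₂ hp hq
  set E := exp (η₂ * lam * t * q / (η₁ + η₂) - lam * t)
  set F := exp (lam * t * p + lam * t * q - lam * t)
  have hE : E ≠ 0 := exp_ne_zero _
  refine ⟨5 + 4 * F / E, by positivity, fun u hu => ?_⟩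
  have hthree := hasSum_rpow_neg_mul_rlInt_lambdaFun s r (β := 3 / 2) (by norm_num) hu
  have hfive := hasSum_rpow_neg_mul_rlInt_lambdaFun s r (β := 5 / 2) (by norm_num) hu
  simp only [hcoef, ← neg_div, show (1 : ℝ) + 3 / 2 = 5 / 2 by norm_num] at hthree
  simp only [hcoef, ← neg_div, show (1 : ℝ) + 5 / 2 = 7 / 2 by norm_num] at hfive
  rw [mul_assoc]
  refine abs_tsum_sub_le_of_abs_sub_le hthree (hfive.mul_left _) fun k => ?_
  rw [← sub_mul, abs_mul, abs_of_pos (pow_pos hu k), ← mul_assoc (5 + 4 * F / E)]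
  refine mul_le_mul_of_nonneg_right ((hbound k).trans_eq ?_) (pow_nonneg hu.le k)
  field_simp

/-- Theorem comparing `G₁(t,·)` with fractional integrals of
`λ_{s,r}`.  With `s = 2√π C₁` and `r = 2√B₁`, where
`C₁ = (η₁λtp/(2π)) exp{η₂λtq/(η₁+η₂) − λt}` and `B₁ = η₁λtp`, there exists a positive
constant `c` such that
`|G₁(t,u) − u^{−3/2} D^{−3/2}λ_{s,r}(u)| ≤ c u^{−5/2} D^{−5/2}λ_{s,r}(u)`
for all `u > 0`. -/
theorem G1_fractional_integral_comparison
    (t lam η₁ η₂ p q : ℝ)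
    (ht : 0 < t) (hlam : 0 < lam) (hη₁ : 1 < η₁) (hη₂ : 0 < η₂)
    (hp : 0 < p) (hq : 0 < q) (hpq : p + q = 1)
    (s r : ℝ)
    (hs : s = 2 * Real.sqrt Real.pi *
      (η₁ * lam * t * p / (2 * Real.pi) *
        Real.exp (η₂ * lam * t * q / (η₁ + η₂) - lam * t)))
    (hr : r = 2 * Real.sqrt (η₁ * lam * t * p)) :
    ∃ c : ℝ, 0 < c ∧ ∀ u : ℝ, 0 < u →
      |G1 lam t η₁ η₂ p q u -
          u ^ (-(3:ℝ)/2) * rlInt (-(3:ℝ)/2) (lambdaFun s r) u| ≤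
        c * u ^ (-(5:ℝ)/2) * rlInt (-(5:ℝ)/2) (lambdaFun s r) u :=
  G1_fractional_integral_comparison_general ht.le hlam.le (one_pos.trans hη₁) hη₂.le hp.le hq.le
    hs hr
end
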